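/- Let f : ℝ → ℝ be C³ with antiderivative F (F' = f, F(0) = 0), G(s; a, c) = F(s) − ((c−1)/2)s² − a·s, and let u(x; a, E, c) be a periodic traveling wave family of the gBBM equation: Ω ⊆ ℝ³ open with c > 1 on Ω; u_− < u_+ C¹ on Ω simple roots of E = G(·; a, c) with G(·; a, c) < E on (u_−, u_+); T(a,E,c) > 0 C¹; u jointly C³ satisfying c·u_xx = (c−1)u − f(u) + a, (c/2)u_x² + G(u; a, c) = E, u(x + T) = u(x), u(0) = u_−, u_x(0) = 0; M = ∫₀^T u dx, P = (1/2)∫₀^T (u² + u_x²) dx. For (μ, k) ∈ ℂ × ℝ let Y(x; μ, k) solve Y_x = H(x; μ, k)·Y, Y(0) = I, where H has rows (0, 1, 0), (0, 0, 1), (−(μ + f''(u(x))·u_x(x))/c, (c − 1 + k² − f'(u(x)))/c, μ/c), and let D(μ, k) = det(Y(T; μ, k) − I). Fix (a₀, E₀, c₀) ∈ Ω and suppose that at this point the Jacobian determinants satisfy {T,M,P}_{a,E,c} > 0 and {T,M}_{a,E} > 0. Then there exists k₀ > 0 such that for every real k with 0 < |k| < k₀ there exists μ ∈ ℂ with Re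 μ > 0 and D(μ, k) = 0. -/

import Mathlib

open MeasureTheory intervalIntegral

/-!
The root is found on the positive real axis, at `μ = κ ν` with `κ = |k|` and `ν` of order one.

Columns of `Y` are jets `(v, v', v'')` of solutions. The spectral equation reads
`(L v)' = k² v' + μ (v'' - v)` with `L v = c v'' - (c - 1 - f'(u)) v`, and differentiating the
profile equation in `x` and in the parameters gives `L u' = 0`, `L u_a = 1`, `L u_E = 0`,
`L u_c = u - u''`. So `u'`, `u_a`, `u_E` span the solutions at `μ = k = 0`; of these only `u'` is
periodic, and `u_a`, `u_E` fail to be so by multiples of `u''(0)` in the first derivative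
(`Slice.jump1`). A combination `V` of `u_c`, `u_a`, `u_E` along which period and mass are
stationary corrects `u'` to second order: `u' + κ ν V` solves the equation with `(μ, k) = (κ ν, κ)`
up to `O(κ²)` (`IsFund.approx_translation`).

The change over a period of the three functionals `c v'' - p v`, `c (u' v' - u'' v) - u (c v'' - p v)`
and `v'` on the three perturbed solutions determines `det (Y(T) - 1)` (`det_identity`). The first two
changes are integrals of the right-hand side of the spectral equation, whose leading orders are
expressed through the derivatives of period, mass and momentum. This yields
`D(κ ν, κ) / κ³ → ν K (∫ u'² - ν² S)` as `κ → 0⁺`, where `K = {T,M}_{a,E}` and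
`S = {T,M,P}_{a,E,c} / {T,M}_{a,E}` (`WaveData.tendsto_evans`). Both `K` and `S` are positive, so the
limit is positive for small `ν` and negative for large `ν`. As `D` is real and continuous on the real
axis, the intermediate value theorem gives a positive root for every small `κ`
(`WaveData.exists_root`).

The identities relating `u_a`, `u_E`, `u_c` to the derivatives of `T`, `M`, `P` are obtained along
one-parameter curves of waves (`Slice`) and put together in `waveData_of_slices`.
-/

namespace TransverseInstability
open Set Filter Topology

/-! ### Linear third order equations with a force -/

/-- `w = (v, v', v'')` is the jet of a solution of the real third order equation
`c v''' = -(m + q) v + (p + k²) v' + m v'' + c r`; the force `r` measures the failure of `w`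
to solve the homogeneous spectral problem with parameters `(m, k)`. -/
structure ForcedSol (c : ℝ) (p q : ℝ → ℝ) (m k : ℝ) (r : ℝ → ℝ) (w : ℝ → Fin 3 → ℝ) : Prop where
  d0 : ∀ x, HasDerivAt (fun y => w y 0) (w x 1) x
  d1 : ∀ x, HasDerivAt (fun y => w y 1) (w x 2) x
  d2 : ∀ x, HasDerivAt (fun y => w y 2)
    ((-(m + q x) * w x 0 + (p x + k ^ 2) * w x 1 + m * w x 2) / c + r x) x

namespace ForcedSol
variable {c m k : ℝ} {p q r r' : ℝ → ℝ} {w w' : ℝ → Fin 3 → ℝ}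

lemma cont (h : ForcedSol c p q m k r w) (i : Fin 3) : Continuous (fun x => w x i) := by
  refine continuous_iff_continuousAt.2 fun x => ?_
  fin_cases i
  · exact (h.d0 x).continuousAt
  · exact (h.d1 x).continuousAt
  · exact (h.d2 x).continuousAt

lemma sub (h : ForcedSol c p q m k r w) (h' : ForcedSol c p q m k r' w') :
    ForcedSol c p q m k (fun x => r x - r' x) (fun x => w x - w' x) where
  d0 x := (h.d0 x).sub (h'.d0 x)
  d1 x := (h.d1 x).sub (h'.d1 x)
  d2 x := by
    refine ((h.d2 x).sub (h'.d2 x)).congr_deriv ?_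
    simp only [Pi.sub_apply]; ring

lemma add (h : ForcedSol c p q m k r w) (h' : ForcedSol c p q m k r' w') :
    ForcedSol c p q m k (fun x => r x + r' x) (fun x => w x + w' x) where
  d0 x := (h.d0 x).add (h'.d0 x)
  d1 x := (h.d1 x).add (h'.d1 x)
  d2 x := by
    refine ((h.d2 x).add (h'.d2 x)).congr_deriv ?_
    simp only [Pi.add_apply]; ring

lemma smul (s : ℝ) (h : ForcedSol c p q m k r w) :
    ForcedSol c p q m k (fun x => s * r x) (fun x => s • w x) where
  d0 x := by simpa using (h.d0 x).const_mul s
  d1 x := by simpa using (h.d1 x).const_mul s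
  d2 x := by
    refine ((h.d2 x).const_mul s).congr_deriv ?_
    simp only [Pi.smul_apply, smul_eq_mul]; ring

/-- A change of the spectral parameters is absorbed into the force. -/
lemma change (h : ForcedSol c p q m k r w) (m' k' : ℝ) :
    ForcedSol c p q m' k'
      (fun x => r x + ((m - m') * (w x 2 - w x 0) + (k ^ 2 - k' ^ 2) * w x 1) / c) w where
  d0 := h.d0
  d1 := h.d1
  d2 x := (h.d2 x).congr_deriv (by ring)

lemma congr_force (h : ForcedSol c p q m k r w) (hr : ∀ x, r x = r' x) :
    ForcedSol c p q m k r' w := by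
  rwa [← funext hr]

/-- Grönwall: with zero initial data the solution is controlled by the force, uniformly for
bounded parameters. -/
lemma gronwall (hc : 0 < c) {T : ℝ} (p q : ℝ → ℝ) (hp : Continuous p) (hq : Continuous q)
    (Mb : ℝ) :
    ∃ C, 0 < C ∧ ∀ (m k ε : ℝ) (r : ℝ → ℝ) (w : ℝ → Fin 3 → ℝ), |m| ≤ Mb → |k| ≤ Mb → 0 ≤ ε →
      (∀ x ∈ Icc 0 T, |r x| ≤ ε) → ForcedSol c p q m k r w → (∀ i, w 0 i = 0) →
      ∀ x ∈ Icc 0 T, ∀ i, |w x i| ≤ C * ε := by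
  obtain ⟨Bp, hBp⟩ := isCompact_Icc.exists_bound_of_continuousOn (s := Icc 0 T) hp.continuousOn
  obtain ⟨Bq, hBq⟩ := isCompact_Icc.exists_bound_of_continuousOn (s := Icc 0 T) hq.continuousOn
  set K : ℝ := 1 + (|Mb| + |Bq| + (|Bp| + |Mb| ^ 2) + |Mb|) / c with hK
  have hK0 : 0 < K := by positivity
  refine ⟨Real.exp (K * |T|) / K, by positivity, ?_⟩
  intro m k ε r w hm hk hε hr hw hw0 x hx i
  have hder : ∀ x, HasDerivAt w (fun i => ![w x 1, w x 2,
      (-(m + q x) * w x 0 + (p x + k ^ 2) * w x 1 + m * w x 2) / c + r x] i) x := by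
    intro x
    rw [hasDerivAt_pi]
    intro i
    fin_cases i
    · exact hw.d0 x
    · exact hw.d1 x
    · exact hw.d2 x
  have key := norm_le_gronwallBound_of_norm_deriv_right_le (f := w) (δ := 0) (K := K) (ε := ε)
    (a := 0) (b := T) (fun x _ => (hder x).continuousAt.continuousWithinAt)
    (fun x _ => (hder x).hasDerivWithinAt)
    (by rw [norm_le_zero_iff]; funext i; exact hw0 i) ?_ x hx
  · rw [gronwallBound_of_K_ne_0 hK0.ne'] at key
    have h1 : |w x i| ≤ ‖w x‖ := norm_le_pi_norm (w x) i
    have h2 : Real.exp (K * (x - 0)) ≤ Real.exp (K * |T|) := by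
      apply Real.exp_le_exp.2
      have := hx.2.trans (le_abs_self T)
      rw [sub_zero]; gcongr
    calc |w x i| ≤ _ := h1.trans key
      _ = ε / K * (Real.exp (K * (x - 0)) - 1) := by ring
      _ ≤ ε / K * Real.exp (K * |T|) := by gcongr; linarith
      _ = _ := by ring
  · intro x hx
    have hx' : x ∈ Icc 0 T := ⟨hx.1, hx.2.le⟩
    have hn : ∀ i, |w x i| ≤ ‖w x‖ := fun i => norm_le_pi_norm (w x) i
    have hN : 0 ≤ ‖w x‖ := norm_nonneg _
    have hKge : 1 ≤ K := by rw [hK]; have : 0 ≤ (|Mb| + |Bq| + (|Bp| + |Mb| ^ 2) + |Mb|) / c := by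
                              positivity
                            linarith
    have h12 : ∀ i, |w x i| ≤ K * ‖w x‖ + ε := fun i => by
      have := hn i
      nlinarith
    have hmM : |m| ≤ |Mb| := hm.trans (le_abs_self _)
    have hkM : |k| ≤ |Mb| := hk.trans (le_abs_self _)
    have hqB : |q x| ≤ |Bq| := (hBq x hx').trans (le_abs_self _)
    have hpB : |p x| ≤ |Bp| := (hBp x hx').trans (le_abs_self _)
    rw [pi_norm_le_iff_of_nonneg (by positivity)]
    intro i
    fin_cases i
    · exact h12 1
    · exact h12 2
    · have e1 : |-(m + q x) * w x 0 + (p x + k ^ 2) * w x 1 + m * w x 2|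
          ≤ (|Mb| + |Bq| + (|Bp| + |Mb| ^ 2) + |Mb|) * ‖w x‖ := by
        calc _ ≤ |-(m + q x) * w x 0| + |(p x + k ^ 2) * w x 1| + |m * w x 2| :=
              abs_add_three _ _ _
          _ ≤ (|Mb| + |Bq|) * ‖w x‖ + (|Bp| + |Mb| ^ 2) * ‖w x‖ + |Mb| * ‖w x‖ := by
              rw [abs_mul, abs_mul, abs_mul, abs_neg]
              have a1 : |m + q x| ≤ |Mb| + |Bq| := (abs_add_le _ _).trans (by gcongr)
              have a2 : |p x + k ^ 2| ≤ |Bp| + |Mb| ^ 2 := by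
                refine (abs_add_le _ _).trans ?_
                rw [abs_pow]; gcongr
              gcongr <;> apply hn
          _ = _ := by ring
      show |(-(m + q x) * w x 0 + (p x + k ^ 2) * w x 1 + m * w x 2) / c + r x| ≤ _
      refine (abs_add_le _ _).trans ?_
      have := hr x hx'
      rw [abs_div, abs_of_pos hc]
      have e2 : |-(m + q x) * w x 0 + (p x + k ^ 2) * w x 1 + m * w x 2| / c
          ≤ (|Mb| + |Bq| + (|Bp| + |Mb| ^ 2) + |Mb|) / c * ‖w x‖ := by
        rw [div_mul_eq_mul_div]; gcongr
      have e3 : K * ‖w x‖ = ‖w x‖ + (|Mb| + |Bq| + (|Bp| + |Mb| ^ 2) + |Mb|) / c * ‖w x‖ := by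
        rw [hK]; ring
      linarith

/-- `c v'' - p v` changes over a period only through the spectral terms. -/
lemma jump1 (hc : c ≠ 0) (h : ForcedSol c p q m k (fun _ => 0) w)
    (hp : ∀ x, HasDerivAt p (-q x) x) (T : ℝ) :
    (c * w T 2 - p T * w T 0) - (c * w 0 2 - p 0 * w 0 0)
      = ∫ x in (0:ℝ)..T, (k ^ 2 * w x 1 + m * (w x 2 - w x 0)) := by
  symm
  apply integral_eq_sub_of_hasDerivAt (f := fun x => c * w x 2 - p x * w x 0)
  · intro x _
    refine (((h.d2 x).const_mul c).sub ((hp x).mul (h.d0 x))).congr_deriv ?_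
    field_simp
    ring
  · have := h.cont 0; have := h.cont 1; have := h.cont 2
    exact Continuous.intervalIntegrable (by fun_prop) _ _

/-- The pairing of `v` with the translation mode `u'`. -/
lemma jump2 (hc : c ≠ 0) (h : ForcedSol c p q m k (fun _ => 0) w)
    (hp : ∀ x, HasDerivAt p (-q x) x) {u0 u1 u2 u3 : ℝ → ℝ}
    (h0 : ∀ x, HasDerivAt u0 (u1 x) x) (h1 : ∀ x, HasDerivAt u1 (u2 x) x)
    (h2 : ∀ x, HasDerivAt u2 (u3 x) x) (h3 : ∀ x, c * u3 x = p x * u1 x) (T : ℝ) :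
    (c * (u1 T * w T 1 - u2 T * w T 0) - u0 T * (c * w T 2 - p T * w T 0))
      - (c * (u1 0 * w 0 1 - u2 0 * w 0 0) - u0 0 * (c * w 0 2 - p 0 * w 0 0))
      = -∫ x in (0:ℝ)..T, u0 x * (k ^ 2 * w x 1 + m * (w x 2 - w x 0)) := by
  rw [← intervalIntegral.integral_neg]
  symm
  apply integral_eq_sub_of_hasDerivAt
    (f := fun x => c * (u1 x * w x 1 - u2 x * w x 0) - u0 x * (c * w x 2 - p x * w x 0))
  · intro x _
    refine (((((h1 x).mul (h.d1 x)).sub ((h2 x).mul (h.d0 x))).const_mul c).sub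
      ((h0 x).mul (((h.d2 x).const_mul c).sub ((hp x).mul (h.d0 x))))).congr_deriv ?_
    have := h3 x
    simp only [Pi.mul_apply, Pi.sub_apply]
    field_simp
    linear_combination (-w x 0) * this
  · have := h.cont 0; have := h.cont 1; have := h.cont 2
    have : Continuous u0 := continuous_iff_continuousAt.2 fun x => (h0 x).continuousAt
    exact Continuous.intervalIntegrable (by fun_prop) _ _

end ForcedSol

/-- Convergence of integrals over `[0, T]` from a uniform `O(κ)` bound on the integrands. -/
lemma tendsto_integral_of_bound {T : ℝ} (hT : 0 ≤ T) (Fk : ℝ → ℝ → ℝ) (F0 : ℝ → ℝ)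
    (hFk : ∀ κ, Continuous (Fk κ)) (hF0 : Continuous F0) (C : ℝ)
    (hb : ∀ κ, 0 < κ → κ ≤ 1 → ∀ x ∈ Icc 0 T, |Fk κ x - F0 x| ≤ C * κ) :
    Tendsto (fun κ => ∫ x in (0:ℝ)..T, Fk κ x) (𝓝[>] 0) (𝓝 (∫ x in (0:ℝ)..T, F0 x)) := by
  rw [tendsto_iff_norm_sub_tendsto_zero]
  have hlim : Tendsto (fun κ : ℝ => C * κ * |T - 0|) (𝓝[>] 0) (𝓝 0) := by
    have : Tendsto (fun κ : ℝ => C * κ * |T - 0|) (𝓝 0) (𝓝 (C * 0 * |T - 0|)) :=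
      Continuous.tendsto (by fun_prop) 0
    simp only [mul_zero, zero_mul] at this
    exact this.mono_left nhdsWithin_le_nhds
  refine squeeze_zero' (Eventually.of_forall fun _ => norm_nonneg _) ?_ hlim
  filter_upwards [Ioc_mem_nhdsGT (show (0:ℝ) < 1 by norm_num)] with κ hκ
  rw [← intervalIntegral.integral_sub ((hFk κ).intervalIntegrable _ _)
    (hF0.intervalIntegrable _ _)]
  apply intervalIntegral.norm_integral_le_of_norm_le_const
  intro x hx
  rw [uIoc_of_le hT] at hx
  exact hb κ hκ.1 hκ.2 x ⟨hx.1.le, hx.2⟩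

lemma tendsto_of_bound (g : ℝ → ℝ) (l C : ℝ)
    (hb : ∀ κ, 0 < κ → κ ≤ 1 → |g κ - l| ≤ C * κ) : Tendsto g (𝓝[>] 0) (𝓝 l) := by
  rw [tendsto_iff_norm_sub_tendsto_zero]
  have hlim : Tendsto (fun κ : ℝ => C * κ) (𝓝[>] 0) (𝓝 0) := by
    have : Tendsto (fun κ : ℝ => C * κ) (𝓝 0) (𝓝 (C * 0)) := Continuous.tendsto (by fun_prop) 0
    simp only [mul_zero] at this
    exact this.mono_left nhdsWithin_le_nhds
  refine squeeze_zero' (Eventually.of_forall fun _ => norm_nonneg _) ?_ hlim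
  filter_upwards [Ioc_mem_nhdsGT (show (0:ℝ) < 1 by norm_num)] with κ hκ
  exact hb κ hκ.1 hκ.2

/-! ### Fundamental matrices and approximate solutions -/

/-- `Y` is the family of fundamental matrices of the homogeneous equation, `Y = 1` at `0`. -/
structure IsFund (c : ℝ) (p q : ℝ → ℝ) (Y : ℝ → ℝ → ℝ → Matrix (Fin 3) (Fin 3) ℝ) : Prop where
  at_zero : ∀ m k, Y m k 0 = 1
  sol : ∀ m k j, ForcedSol c p q m k (fun _ => 0) (fun x i => Y m k x i j)

namespace IsFund
open Matrix
variable {c : ℝ} {p q : ℝ → ℝ} {Y : ℝ → ℝ → ℝ → Matrix (Fin 3) (Fin 3) ℝ}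

lemma evolve (hY : IsFund c p q Y) (m k : ℝ) (z : Fin 3 → ℝ) :
    ForcedSol c p q m k (fun _ => 0) (fun x => Y m k x *ᵥ z) := by
  have e := (((hY.sol m k 0).smul (z 0)).add ((hY.sol m k 1).smul (z 1))).add
    ((hY.sol m k 2).smul (z 2))
  have : (fun x => Y m k x *ᵥ z) = fun x => z 0 • (fun i => Y m k x i 0) +
      z 1 • (fun i => Y m k x i 1) + z 2 • (fun i => Y m k x i 2) := by
    funext x i
    simp [mulVec, dotProduct, Fin.sum_univ_three, mul_comm]
  rw [this]
  exact e.congr_force (by simp)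

/-- An approximate solution stays close to the exact solution with the same initial data. -/
lemma approx (hc : 0 < c) (hp : Continuous p) (hq : Continuous q) (hY : IsFund c p q Y)
    (T Mb : ℝ) :
    ∃ C, 0 < C ∧ ∀ (m k ε : ℝ) (r : ℝ → ℝ) (a : ℝ → Fin 3 → ℝ), |m| ≤ Mb → |k| ≤ Mb → 0 ≤ ε →
      (∀ x ∈ Icc 0 T, |r x| ≤ ε) → ForcedSol c p q m k r a →
      ∀ x ∈ Icc 0 T, ∀ i, |(Y m k x *ᵥ a 0) i - a x i| ≤ C * ε := by
  obtain ⟨C, hC, h⟩ := ForcedSol.gronwall hc (T := T) p q hp hq Mb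
  refine ⟨C, hC, fun m k ε r a hm hk hε hr ha x hx i => ?_⟩
  have := h m k ε _ _ hm hk hε ?_ ((hY.evolve m k (a 0)).sub ha) ?_ x hx i
  · simpa using this
  · intro x hx; simpa using hr x hx
  · intro i; simp [hY.at_zero]

/-- The periodic Evans function is continuous in the spectral parameter. -/
lemma continuous_det (hc : 0 < c) (hp : Continuous p) (hq : Continuous q) (hY : IsFund c p q Y)
    {T : ℝ} (hT : 0 ≤ T) (k : ℝ) : Continuous (fun m => (Y m k T - 1).det) := by
  have hent : ∀ i j, Continuous (fun m => Y m k T i j) := by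
    intro i j
    refine continuous_iff_continuousAt.2 fun m₀ => ?_
    obtain ⟨C, hC, h⟩ := hY.approx hc hp hq T (|m₀| + 1 + |k|)
    have hcont := fun l => (hY.sol m₀ k j).cont l
    obtain ⟨B, hB⟩ := isCompact_Icc.exists_bound_of_continuousOn (s := Icc 0 T)
      (f := fun x => (Y m₀ k x 2 j - Y m₀ k x 0 j) / c)
      (((hcont 2).sub (hcont 0)).div_const c).continuousOn
    have hloc : ∀ᶠ m in 𝓝 m₀, |Y m k T i j - Y m₀ k T i j| ≤ C * (|m₀ - m| * |B|) := by
      filter_upwards [Metric.ball_mem_nhds m₀ one_pos] with m hm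
      rw [Metric.mem_ball, Real.dist_eq] at hm
      have hm' : |m| ≤ |m₀| + 1 + |k| := by
        have := abs_sub_abs_le_abs_sub m m₀
        have := abs_nonneg k
        linarith
      have hk' : |k| ≤ |m₀| + 1 + |k| := by have := abs_nonneg m₀; linarith
      have := h m k (|m₀ - m| * |B|) _ _ hm' hk' (by positivity) ?_
        ((hY.sol m₀ k j).change m k) T ⟨hT, le_rfl⟩ i
      · have e : (fun i => Y m₀ k 0 i j) = Pi.single j 1 := by
          funext l; rw [hY.at_zero]; simp [one_apply, Pi.single_apply]
        rw [e] at this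
        simpa using this
      · intro x hx
        have e : (0 + ((m₀ - m) * (Y m₀ k x 2 j - Y m₀ k x 0 j) + (k ^ 2 - k ^ 2) * Y m₀ k x 1 j) / c)
          = (m₀ - m) * ((Y m₀ k x 2 j - Y m₀ k x 0 j) / c) := by ring
        rw [e, abs_mul]
        exact mul_le_mul_of_nonneg_left ((hB x hx).trans (le_abs_self B)) (abs_nonneg _)
    rw [ContinuousAt, tendsto_iff_norm_sub_tendsto_zero]
    refine squeeze_zero' (Eventually.of_forall fun _ => norm_nonneg _) hloc ?_
    have : Tendsto (fun m => C * (|m₀ - m| * |B|)) (𝓝 m₀) (𝓝 (C * (|m₀ - m₀| * |B|))) :=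
      Continuous.tendsto (by fun_prop) m₀
    simpa using this
  apply Continuous.matrix_det
  exact (continuous_matrix hent).sub continuous_const

/-- Solutions in the scaling `(m, k) = (κ ν, κ)` converge to the solution of the unperturbed
equation. -/
lemma approx_zero (hc : 0 < c) (hp : Continuous p) (hq : Continuous q) (hY : IsFund c p q Y)
    (T ν : ℝ) {A : ℝ → Fin 3 → ℝ} (hA : ForcedSol c p q 0 0 (fun _ => 0) A) :
    ∃ C, 0 < C ∧ ∀ κ, 0 < κ → κ ≤ 1 → ∀ x ∈ Icc 0 T, ∀ i,
      |(Y (κ * ν) κ x *ᵥ A 0) i - A x i| ≤ C * κ := by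
  obtain ⟨C, hC, h⟩ := hY.approx hc hp hq T (|ν| + 1)
  have h0 := hA.cont 0; have h1 := hA.cont 1; have h2 := hA.cont 2
  obtain ⟨B1, hB1⟩ := isCompact_Icc.exists_bound_of_continuousOn (s := Icc 0 T)
      (f := fun x => -(ν * (A x 2 - A x 0)) / c) (Continuous.continuousOn (by fun_prop))
  obtain ⟨B2, hB2⟩ := isCompact_Icc.exists_bound_of_continuousOn (s := Icc 0 T)
      (f := fun x => -A x 1 / c) (Continuous.continuousOn (by fun_prop))
  refine ⟨C * (|B1| + |B2| + 1), by positivity, fun κ hκ hκ1 x hx i => ?_⟩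
  have := h (κ * ν) κ ((|B1| + |B2| + 1) * κ) _ _ ?_ ?_ (by positivity) ?_ (hA.change (κ * ν) κ) x hx i
  · rwa [mul_assoc]
  · rw [abs_mul, abs_of_pos hκ]; nlinarith [abs_nonneg ν]
  · rw [abs_of_pos hκ]; linarith [abs_nonneg ν]
  · intro x hx
    have e : 0 + ((0 - κ * ν) * (A x 2 - A x 0) + (0 ^ 2 - κ ^ 2) * A x 1) / c =
      κ * (-(ν * (A x 2 - A x 0)) / c + κ * (-A x 1 / c)) := by ring
    rw [e, abs_mul, abs_of_pos hκ, mul_comm]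
    gcongr
    refine (abs_add_le _ _).trans ?_
    rw [abs_mul, abs_of_pos hκ]
    have b1 : |-(ν * (A x 2 - A x 0)) / c| ≤ |B1| := (hB1 x hx).trans (le_abs_self _)
    have b2 : |-A x 1 / c| ≤ |B2| := (hB2 x hx).trans (le_abs_self _)
    have := abs_nonneg (-A x 1 / c)
    nlinarith

/-- Second order accuracy of the corrected translation mode `u' + κ ν V`: the forcing of `V`
cancels the residual of `u'` at order `κ`. -/
lemma approx_translation (hc : 0 < c) (hp : Continuous p) (hq : Continuous q)
    (hY : IsFund c p q Y) (T ν : ℝ) {U V : ℝ → Fin 3 → ℝ}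
    (hU : ForcedSol c p q 0 0 (fun _ => 0) U)
    (hV : ForcedSol c p q 0 0 (fun x => (U x 2 - U x 0) / c) V) :
    ∃ C, 0 < C ∧ ∀ κ, 0 < κ → κ ≤ 1 → ∀ x ∈ Icc 0 T, ∀ i,
      |(Y (κ * ν) κ x *ᵥ (U 0 + (κ * ν) • V 0)) i - (U x i + κ * ν * V x i)| ≤ C * κ ^ 2 := by
  obtain ⟨C, hC, h⟩ := hY.approx hc hp hq T (|ν| + 1)
  have h0 := hV.cont 0; have h1 := hV.cont 1; have h2 := hV.cont 2; have h3 := hU.cont 1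
  obtain ⟨B1, hB1⟩ := isCompact_Icc.exists_bound_of_continuousOn (s := Icc 0 T)
      (f := fun x => -(ν ^ 2 * (V x 2 - V x 0) + U x 1) / c) (Continuous.continuousOn (by fun_prop))
  obtain ⟨B2, hB2⟩ := isCompact_Icc.exists_bound_of_continuousOn (s := Icc 0 T)
      (f := fun x => -(ν * V x 1) / c) (Continuous.continuousOn (by fun_prop))
  refine ⟨C * (|B1| + |B2| + 1), by positivity, fun κ hκ hκ1 x hx i => ?_⟩
  have := h (κ * ν) κ ((|B1| + |B2| + 1) * κ ^ 2) _ _ ?_ ?_ (by positivity) ?_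
    ((hU.add (hV.smul (κ * ν))).change (κ * ν) κ) x hx i
  · rw [mul_assoc C]; exact this
  · rw [abs_mul, abs_of_pos hκ]; nlinarith [abs_nonneg ν]
  · rw [abs_of_pos hκ]; linarith [abs_nonneg ν]
  · intro x hx
    simp only [Pi.add_apply, Pi.smul_apply, smul_eq_mul]
    have e : 0 + κ * ν * ((U x 2 - U x 0) / c) + ((0 - κ * ν) * (U x 2 + κ * ν * V x 2 -
        (U x 0 + κ * ν * V x 0)) + (0 ^ 2 - κ ^ 2) * (U x 1 + κ * ν * V x 1)) / c =
      κ ^ 2 * (-(ν ^ 2 * (V x 2 - V x 0) + U x 1) / c + κ * (-(ν * V x 1) / c)) := by ring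
    rw [e, abs_mul, abs_of_pos (pow_pos hκ 2), mul_comm]
    gcongr
    refine (abs_add_le _ _).trans ?_
    rw [abs_mul, abs_of_pos hκ]
    have b1 : |-(ν ^ 2 * (V x 2 - V x 0) + U x 1) / c| ≤ |B1| := (hB1 x hx).trans (le_abs_self _)
    have b2 : |-(ν * V x 1) / c| ≤ |B2| := (hB2 x hx).trans (le_abs_self _)
    have := abs_nonneg (-(ν * V x 1) / c)
    nlinarith

end IsFund

/-! ### Leading orders of the spectral integrals -/

/-- Pointwise comparison behind `tendsto_param`, with `y` within `C κ` of `b`. -/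
lemma param_estimate {κ C ν g G β y0 y1 y2 b0 b1 b2 : ℝ} (hκ : 0 < κ) (hκ1 : κ ≤ 1) (hC : 0 < C)
    (e0 : |y0 - b0| ≤ C * κ) (e1 : |y1 - b1| ≤ C * κ) (e2 : |y2 - b2| ≤ C * κ)
    (hb : |b1| ≤ β) (hg : |g| ≤ G) :
    |g * (κ * y1 + ν * (y2 - y0)) - g * (ν * (b2 - b0))| ≤ G * (β + C + |ν| * (2 * C)) * κ := by
  have e : g * (κ * y1 + ν * (y2 - y0)) - g * (ν * (b2 - b0))
      = g * (κ * (b1 + (y1 - b1)) + ν * ((y2 - b2) - (y0 - b0))) := by ring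
  have f1 : |b1 + (y1 - b1)| ≤ β + C := by
    refine (abs_add_le _ _).trans ?_
    nlinarith
  have f2 : |(y2 - b2) - (y0 - b0)| ≤ 2 * C * κ := by
    refine (abs_sub _ _).trans ?_
    linarith
  rw [e, abs_mul, mul_assoc G]
  refine mul_le_mul hg ?_ (abs_nonneg _) ((abs_nonneg _).trans hg)
  refine (abs_add_le _ _).trans ?_
  rw [abs_mul, abs_mul, abs_of_pos hκ]
  calc _ ≤ κ * (β + C) + |ν| * (2 * C * κ) := by gcongr
    _ = _ := by ring

/-- Pointwise comparison behind `tendsto_translation`, with `y` within `C κ²` of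
`b + κ ν v`. -/
lemma translation_estimate {κ C ν g G β y0 y1 y2 b0 b1 b2 v0 v1 v2 : ℝ} (hκ : 0 < κ)
    (hκ1 : κ ≤ 1) (hC : 0 < C)
    (e0 : |y0 - (b0 + κ * ν * v0)| ≤ C * κ ^ 2) (e1 : |y1 - (b1 + κ * ν * v1)| ≤ C * κ ^ 2)
    (e2 : |y2 - (b2 + κ * ν * v2)| ≤ C * κ ^ 2) (hb : |v1| ≤ β) (hg : |g| ≤ G) :
    |g * (y1 + ν / κ * ((y2 - b2) - (y0 - b0))) - g * (b1 + ν ^ 2 * (v2 - v0))|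
      ≤ G * (|ν| * β + C + |ν| * (2 * C)) * κ := by
  have e : g * (y1 + ν / κ * ((y2 - b2) - (y0 - b0))) - g * (b1 + ν ^ 2 * (v2 - v0))
      = g * (κ * (ν * v1) + (y1 - (b1 + κ * ν * v1)) +
        ν * ((((y2 - (b2 + κ * ν * v2)) - (y0 - (b0 + κ * ν * v0)))) / κ)) := by
    field_simp; ring
  have f2 : |((y2 - (b2 + κ * ν * v2)) - (y0 - (b0 + κ * ν * v0))) / κ| ≤ 2 * C * κ := by
    rw [abs_div, abs_of_pos hκ, div_le_iff₀ hκ]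
    refine (abs_sub _ _).trans ?_
    linarith
  rw [e, abs_mul, mul_assoc G]
  refine mul_le_mul hg ?_ (abs_nonneg _) ((abs_nonneg _).trans hg)
  refine (abs_add_three _ _ _).trans ?_
  rw [abs_mul, abs_mul, abs_mul, abs_of_pos hκ]
  have hκ2 : κ ^ 2 ≤ κ := by nlinarith
  calc _ ≤ κ * (|ν| * β) + C * κ ^ 2 + |ν| * (2 * C * κ) := by gcongr
    _ ≤ κ * (|ν| * β) + C * κ + |ν| * (2 * C * κ) := by gcongr
    _ = _ := by ring

/-- Leading order of the weighted spectral terms along a family `w κ` with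
`w κ = B + O(κ)`. -/
lemma tendsto_param {T : ℝ} (hT : 0 ≤ T) (ν C : ℝ) (hC : 0 < C) {w : ℝ → ℝ → Fin 3 → ℝ}
    {B : ℝ → Fin 3 → ℝ} (hw : ∀ κ i, Continuous fun x => w κ x i)
    (hB : ∀ i, Continuous fun x => B x i)
    (h : ∀ κ, 0 < κ → κ ≤ 1 → ∀ x ∈ Icc 0 T, ∀ i, |w κ x i - B x i| ≤ C * κ)
    (g : ℝ → ℝ) (hg : Continuous g) :
    Tendsto (fun κ => (∫ x in (0:ℝ)..T, g x * (κ ^ 2 * w κ x 1 + κ * ν *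
        (w κ x 2 - w κ x 0))) / κ) (𝓝[>] 0)
      (𝓝 (∫ x in (0:ℝ)..T, g x * (ν * (B x 2 - B x 0)))) := by
  have c0 := hB 0; have c1 := hB 1; have c2 := hB 2
  obtain ⟨G, hG⟩ := isCompact_Icc.exists_bound_of_continuousOn (s := Icc 0 T) hg.continuousOn
  obtain ⟨B1, hB1⟩ := isCompact_Icc.exists_bound_of_continuousOn (s := Icc 0 T)
      (f := fun x => B x 1) c1.continuousOn
  have key := tendsto_integral_of_bound hT
    (fun κ x => g x * (κ * w κ x 1 + ν * (w κ x 2 - w κ x 0)))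
    (fun x => g x * (ν * (B x 2 - B x 0))) (fun κ => by
      have := hw κ 0; have := hw κ 1; have := hw κ 2
      fun_prop) (by fun_prop) (G * (B1 + C + |ν| * (2 * C))) (fun κ hκ hκ1 x hx =>
      param_estimate hκ hκ1 hC (h κ hκ hκ1 x hx 0) (h κ hκ hκ1 x hx 1) (h κ hκ hκ1 x hx 2)
        (hB1 x hx) (hG x hx))
  refine key.congr' ?_
  filter_upwards [self_mem_nhdsWithin] with κ hκ
  have hκ0 : κ ≠ 0 := ne_of_gt hκ
  rw [eq_div_iff hκ0, ← intervalIntegral.integral_mul_const]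
  exact intervalIntegral.integral_congr fun x _ => by ring

/-- Leading (second) order of the weighted spectral terms along a family `w κ` with
`w κ = U + κ ν V + O(κ²)`, when the first order term integrates to zero. -/
lemma tendsto_translation {T : ℝ} (hT : 0 ≤ T) (ν C : ℝ) (hC : 0 < C) {w : ℝ → ℝ → Fin 3 → ℝ}
    {U V : ℝ → Fin 3 → ℝ} (hw : ∀ κ i, Continuous fun x => w κ x i)
    (hU : ∀ i, Continuous fun x => U x i) (hV : ∀ i, Continuous fun x => V x i)
    (h : ∀ κ, 0 < κ → κ ≤ 1 → ∀ x ∈ Icc 0 T, ∀ i,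
      |w κ x i - (U x i + κ * ν * V x i)| ≤ C * κ ^ 2)
    (g : ℝ → ℝ) (hg : Continuous g) (hgU : ∫ x in (0:ℝ)..T, g x * (U x 2 - U x 0) = 0) :
    Tendsto (fun κ => (∫ x in (0:ℝ)..T, g x * (κ ^ 2 * w κ x 1 + κ * ν *
        (w κ x 2 - w κ x 0))) / κ ^ 2) (𝓝[>] 0)
      (𝓝 (∫ x in (0:ℝ)..T, g x * (U x 1 + ν ^ 2 * (V x 2 - V x 0)))) := by
  have c0 := hV 0; have c1 := hV 1; have c2 := hV 2
  have d0 := hU 0; have d1 := hU 1; have d2 := hU 2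
  obtain ⟨G, hG⟩ := isCompact_Icc.exists_bound_of_continuousOn (s := Icc 0 T) hg.continuousOn
  obtain ⟨B1, hB1⟩ := isCompact_Icc.exists_bound_of_continuousOn (s := Icc 0 T)
      (f := fun x => V x 1) c1.continuousOn
  have key := tendsto_integral_of_bound hT
    (fun κ x => g x * (w κ x 1 + ν / κ * ((w κ x 2 - U x 2) - (w κ x 0 - U x 0))))
    (fun x => g x * (U x 1 + ν ^ 2 * (V x 2 - V x 0))) (fun κ => by
      have := hw κ 0; have := hw κ 1; have := hw κ 2
      fun_prop) (by fun_prop) (G * (|ν| * B1 + C + |ν| * (2 * C))) (fun κ hκ hκ1 x hx =>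
      translation_estimate hκ hκ1 hC (h κ hκ hκ1 x hx 0) (h κ hκ hκ1 x hx 1)
        (h κ hκ hκ1 x hx 2) (hB1 x hx) (hG x hx))
  refine key.congr' ?_
  filter_upwards [self_mem_nhdsWithin] with κ hκ
  have hκ0 : κ ≠ 0 := ne_of_gt hκ
  have := hw κ 0; have := hw κ 1; have := hw κ 2
  have z : (∫ x in (0:ℝ)..T, κ * ν * (g x * (U x 2 - U x 0))) = 0 := by
    rw [intervalIntegral.integral_const_mul, hgU, mul_zero]
  have z2 : (∫ x in (0:ℝ)..T, g x * (κ ^ 2 * w κ x 1 + κ * ν * (w κ x 2 - w κ x 0)))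
      = ∫ x in (0:ℝ)..T, (g x * (κ ^ 2 * w κ x 1 + κ * ν * (w κ x 2 - w κ x 0))
        - κ * ν * (g x * (U x 2 - U x 0))) := by
    rw [intervalIntegral.integral_sub, z, sub_zero]
    · exact Continuous.intervalIntegrable (by fun_prop) _ _
    · exact Continuous.intervalIntegrable (by fun_prop) _ _
  rw [eq_div_iff (pow_ne_zero 2 hκ0), z2, ← intervalIntegral.integral_mul_const]
  exact intervalIntegral.integral_congr fun x _ => by field_simp; ring

/-- The data of a periodic wave `u = u0` with derivatives `u1, u2, u3`, for
`p = c - 1 - f'(u)` and `q = f''(u) u'`. The jets `A`, `E` are the derivatives of the wave in the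
parameters `a`, `E`, and `V` is the combination of parameter derivatives that is periodic and
has zero mean, with the sign of the `c`-derivative chosen such that its force cancels the order
`κ` residual of `u'`; `tA, tE, MA, ME` are the derivatives of period and mass, and `S` stands for
the quotient of the two Jacobian determinants. -/
structure WaveData (c T : ℝ) (p q u0 u1 u2 u3 : ℝ → ℝ) (A E V : ℝ → Fin 3 → ℝ)
    (tA tE MA ME S : ℝ) : Prop where
  c_pos : 0 < c
  T_pos : 0 < T
  hp : ∀ x, HasDerivAt p (-q x) x
  hq : Continuous q
  h0 : ∀ x, HasDerivAt u0 (u1 x) x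
  h1 : ∀ x, HasDerivAt u1 (u2 x) x
  h2 : ∀ x, HasDerivAt u2 (u3 x) x
  h3 : ∀ x, c * u3 x = p x * u1 x
  per0 : u0 T = u0 0
  u1_zero : u1 0 = 0
  u1_T : u1 T = 0
  per2 : u2 T = u2 0
  perp : p T = p 0
  u2_ne : u2 0 ≠ 0
  solA : ForcedSol c p q 0 0 (fun _ => 0) A
  solE : ForcedSol c p q 0 0 (fun _ => 0) E
  solV : ForcedSol c p q 0 0 (fun x => (u3 x - u1 x) / c) V
  ellA : c * A 0 2 - p 0 * A 0 0 = 1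
  ellE : c * E 0 2 - p 0 * E 0 0 = 0
  energyE : -(c * u2 0 * E 0 0) = 1
  jumpA : A T 1 = A 0 1 - tA * u2 0
  jumpE : E T 1 = E 0 1 - tE * u2 0
  massA : ∫ x in (0:ℝ)..T, A x 0 = MA - tA * u0 0
  massE : ∫ x in (0:ℝ)..T, E x 0 = ME - tE * u0 0
  perV0 : V T 0 = V 0 0
  perV1 : V T 1 = V 0 1
  massV : ∫ x in (0:ℝ)..T, V x 0 = 0
  momV : ∫ x in (0:ℝ)..T, V x 0 * (u0 x - u2 x) = -S
  S_pos : 0 < S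
  K_pos : 0 < tA * ME - tE * MA

namespace WaveData
open Matrix
variable {c T : ℝ} {p q u0 u1 u2 u3 : ℝ → ℝ} {A E V : ℝ → Fin 3 → ℝ} {tA tE MA ME S : ℝ}
  {Y : ℝ → ℝ → ℝ → Matrix (Fin 3) (Fin 3) ℝ}

lemma cont_p (W : WaveData c T p q u0 u1 u2 u3 A E V tA tE MA ME S) : Continuous p :=
  continuous_iff_continuousAt.2 fun x => (W.hp x).continuousAt
lemma cont0 (W : WaveData c T p q u0 u1 u2 u3 A E V tA tE MA ME S) : Continuous u0 :=
  continuous_iff_continuousAt.2 fun x => (W.h0 x).continuousAt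
lemma cont1 (W : WaveData c T p q u0 u1 u2 u3 A E V tA tE MA ME S) : Continuous u1 :=
  continuous_iff_continuousAt.2 fun x => (W.h1 x).continuousAt
lemma cont2 (W : WaveData c T p q u0 u1 u2 u3 A E V tA tE MA ME S) : Continuous u2 :=
  continuous_iff_continuousAt.2 fun x => (W.h2 x).continuousAt
lemma cont3 (W : WaveData c T p q u0 u1 u2 u3 A E V tA tE MA ME S) : Continuous u3 := by
  have : u3 = fun x => p x * u1 x / c := by
    funext x; rw [eq_div_iff W.c_pos.ne', ← W.h3 x]; ring
  rw [this]
  exact (W.cont_p.mul W.cont1).div_const c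

/-- The translation mode `u'` solves the unperturbed equation. -/
lemma solU (W : WaveData c T p q u0 u1 u2 u3 A E V tA tE MA ME S) :
    ForcedSol c p q 0 0 (fun _ => 0) (fun x => ![u1 x, u2 x, u3 x]) where
  d0 x := W.h1 x
  d1 x := W.h2 x
  d2 x := by
    have : u3 = fun x => p x * u1 x / c := by
      funext x; rw [eq_div_iff W.c_pos.ne', ← W.h3 x]; ring
    have e : HasDerivAt u3 ((-q x * u1 x + p x * u2 x) / c) x := by
      rw [this]; exact ((W.hp x).mul (W.h1 x)).div_const c
    refine e.congr_deriv ?_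
    simp

/-- The functional `c v'' - p v` of a jet `z = (v, v', v'')` at an endpoint of the period, where
`p = p0`. -/
def ell1 (c p0 : ℝ) (z : Fin 3 → ℝ) : ℝ := c * z 2 - p0 * z 0

/-- The functional `c (u' v' - u'' v) - u (c v'' - p v)` of a jet `z = (v, v', v'')` at an endpoint
of the period, where `u = u00`, `u' = 0`, `u'' = u20`. -/
def ell2 (c p0 u00 u20 : ℝ) (z : Fin 3 → ℝ) : ℝ := -(c * u20 * z 0) - u00 * (c * z 2 - p0 * z 0)

lemma jump_ell1 (W : WaveData c T p q u0 u1 u2 u3 A E V tA tE MA ME S) {m k : ℝ}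
    {w : ℝ → Fin 3 → ℝ} (h : ForcedSol c p q m k (fun _ => 0) w) :
    ell1 c (p 0) (w T) - ell1 c (p 0) (w 0)
      = ∫ x in (0:ℝ)..T, (k ^ 2 * w x 1 + m * (w x 2 - w x 0)) := by
  rw [← h.jump1 W.c_pos.ne' W.hp T, W.perp, ell1, ell1]

lemma jump_ell2 (W : WaveData c T p q u0 u1 u2 u3 A E V tA tE MA ME S) {m k : ℝ}
    {w : ℝ → Fin 3 → ℝ} (h : ForcedSol c p q m k (fun _ => 0) w) :
    ell2 c (p 0) (u0 0) (u2 0) (w T) - ell2 c (p 0) (u0 0) (u2 0) (w 0)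
      = -∫ x in (0:ℝ)..T, u0 x * (k ^ 2 * w x 1 + m * (w x 2 - w x 0)) := by
  rw [← h.jump2 W.c_pos.ne' W.hp W.h0 W.h1 W.h2 W.h3 T, W.perp, W.u1_zero, W.u1_T, W.per0,
    W.per2, ell2, ell2]
  ring

/-! ### The low-frequency limit of the Evans function -/

lemma integral_u3 (W : WaveData c T p q u0 u1 u2 u3 A E V tA tE MA ME S) :
    ∫ x in (0:ℝ)..T, (1:ℝ) * (u3 x - u1 x) = 0 := by
  have d1 := W.cont1; have d3 := W.cont3
  rw [integral_eq_sub_of_hasDerivAt (f := fun x => u2 x - u0 x)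
    (fun x _ => ((W.h2 x).sub (W.h0 x)).congr_deriv (by ring))
    (Continuous.intervalIntegrable (by fun_prop) _ _), W.per0, W.per2, sub_self]

lemma integral_u0_u3 (W : WaveData c T p q u0 u1 u2 u3 A E V tA tE MA ME S) :
    ∫ x in (0:ℝ)..T, u0 x * (u3 x - u1 x) = 0 := by
  have d0 := W.cont0; have d1 := W.cont1; have d3 := W.cont3
  rw [integral_eq_sub_of_hasDerivAt
    (f := fun x => u0 x * u2 x - u1 x * u1 x / 2 - u0 x * u0 x / 2)
    (fun x _ => ((((W.h0 x).mul (W.h2 x)).sub (((W.h1 x).mul (W.h1 x)).div_const 2)).sub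
      (((W.h0 x).mul (W.h0 x)).div_const 2)).congr_deriv (by ring))
    (Continuous.intervalIntegrable (by fun_prop) _ _), W.per0, W.per2, W.u1_T, W.u1_zero, sub_self]

lemma integral_second_order (W : WaveData c T p q u0 u1 u2 u3 A E V tA tE MA ME S) (ν : ℝ) :
    ∫ x in (0:ℝ)..T, (1:ℝ) * (u2 x + ν ^ 2 * (V x 2 - V x 0)) = 0 := by
  have d2 := W.cont2
  have c0 := W.solV.cont 0; have c2 := W.solV.cont 2
  have e : ∫ x in (0:ℝ)..T, (u2 x + ν ^ 2 * V x 2) = 0 := by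
    rw [integral_eq_sub_of_hasDerivAt (f := fun x => u1 x + ν ^ 2 * V x 1)
      (fun x _ => (W.h1 x).add ((W.solV.d1 x).const_mul (ν ^ 2)))
      (Continuous.intervalIntegrable (by fun_prop) _ _), W.u1_T, W.u1_zero, W.perV1, sub_self]
  have e2 : ∫ x in (0:ℝ)..T, (1:ℝ) * (u2 x + ν ^ 2 * (V x 2 - V x 0))
      = ∫ x in (0:ℝ)..T, ((u2 x + ν ^ 2 * V x 2) - ν ^ 2 * V x 0) :=
    intervalIntegral.integral_congr fun x _ => by ring
  rw [e2, intervalIntegral.integral_sub (Continuous.intervalIntegrable (by fun_prop) _ _)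
    (Continuous.intervalIntegrable (by fun_prop) _ _), e, intervalIntegral.integral_const_mul,
    W.massV]
  simp

/-- The solvability integral: `∫ u'² - ν² S`. -/
lemma integral_u0_second_order (W : WaveData c T p q u0 u1 u2 u3 A E V tA tE MA ME S) (ν : ℝ) :
    -∫ x in (0:ℝ)..T, u0 x * (u2 x + ν ^ 2 * (V x 2 - V x 0))
      = (∫ x in (0:ℝ)..T, u1 x ^ 2) - ν ^ 2 * S := by
  have d0 := W.cont0; have d1 := W.cont1; have d2 := W.cont2
  have c0 := W.solV.cont 0; have c1 := W.solV.cont 1; have c2 := W.solV.cont 2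
  have e : ∫ x in (0:ℝ)..T, (u1 x ^ 2 + u0 x * u2 x + ν ^ 2 * (u0 x * V x 2 - u2 x * V x 0)) = 0 := by
    rw [integral_eq_sub_of_hasDerivAt
      (f := fun x => u0 x * u1 x + ν ^ 2 * (u0 x * V x 1 - u1 x * V x 0))
      (fun x _ => (((W.h0 x).mul (W.h1 x)).add ((((W.h0 x).mul (W.solV.d1 x)).sub
        ((W.h1 x).mul (W.solV.d0 x))).const_mul (ν ^ 2))).congr_deriv (by ring))
      (Continuous.intervalIntegrable (by fun_prop) _ _), W.u1_T, W.u1_zero, W.perV1, W.per0]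
    ring
  have e2 : ∫ x in (0:ℝ)..T, u0 x * (u2 x + ν ^ 2 * (V x 2 - V x 0))
      = ∫ x in (0:ℝ)..T, (((u1 x ^ 2 + u0 x * u2 x + ν ^ 2 * (u0 x * V x 2 - u2 x * V x 0))
        - u1 x ^ 2) - ν ^ 2 * (V x 0 * (u0 x - u2 x))) :=
    intervalIntegral.integral_congr fun x _ => by ring
  rw [e2, intervalIntegral.integral_sub (Continuous.intervalIntegrable (by fun_prop) _ _)
    (Continuous.intervalIntegrable (by fun_prop) _ _),
    intervalIntegral.integral_sub (Continuous.intervalIntegrable (by fun_prop) _ _)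
    (Continuous.intervalIntegrable (by fun_prop) _ _), e, intervalIntegral.integral_const_mul,
    W.momV]
  ring

lemma integral_param {B : ℝ → Fin 3 → ℝ} (hB : ForcedSol c p q 0 0 (fun _ => 0) B)
    (ν t M u00 u20 : ℝ)
    (hj : B T 1 = B 0 1 - t * u20) (hm : ∫ x in (0:ℝ)..T, B x 0 = M - t * u00) :
    ∫ x in (0:ℝ)..T, (1:ℝ) * (ν * (B x 2 - B x 0)) = -ν * (M + t * (u20 - u00)) := by
  have c0 := hB.cont 0; have c2 := hB.cont 2
  have e : ∫ x in (0:ℝ)..T, B x 2 = -(t * u20) := by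
    rw [integral_eq_sub_of_hasDerivAt (f := fun x => B x 1) (fun x _ => hB.d1 x)
      (Continuous.intervalIntegrable (by fun_prop) _ _), hj]
    ring
  simp only [one_mul]
  rw [intervalIntegral.integral_const_mul,
    intervalIntegral.integral_sub (Continuous.intervalIntegrable (by fun_prop) _ _)
    (Continuous.intervalIntegrable (by fun_prop) _ _), e, hm]
  ring

/-- The change of `(ell1, ell2, v')` over a period, for three solutions, computes the Evans
function. -/
lemma det_identity (c p0 u00 u20 : ℝ) (Z : Matrix (Fin 3) (Fin 3) ℝ) (w a e : Fin 3 → ℝ) :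
    (!![ell1 c p0 (Z *ᵥ w) - ell1 c p0 w, ell1 c p0 (Z *ᵥ a) - ell1 c p0 a,
          ell1 c p0 (Z *ᵥ e) - ell1 c p0 e;
        ell2 c p0 u00 u20 (Z *ᵥ w) - ell2 c p0 u00 u20 w,
          ell2 c p0 u00 u20 (Z *ᵥ a) - ell2 c p0 u00 u20 a,
          ell2 c p0 u00 u20 (Z *ᵥ e) - ell2 c p0 u00 u20 e;
        (Z *ᵥ w) 1 - w 1, (Z *ᵥ a) 1 - a 1, (Z *ᵥ e) 1 - e 1] : Matrix (Fin 3) (Fin 3) ℝ).det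
      = (Z - 1).det *
        (!![ell1 c p0 w, ell1 c p0 a, ell1 c p0 e;
            ell2 c p0 u00 u20 w, ell2 c p0 u00 u20 a, ell2 c p0 u00 u20 e;
            w 1, a 1, e 1] : Matrix (Fin 3) (Fin 3) ℝ).det := by
  set L : Matrix (Fin 3) (Fin 3) ℝ := !![-p0, 0, c; -(c * u20) + u00 * p0, 0, -(u00 * c); 0, 1, 0]
    with hL
  set X : Matrix (Fin 3) (Fin 3) ℝ := !![w 0, a 0, e 0; w 1, a 1, e 1; w 2, a 2, e 2] with hX
  have h1 : (!![ell1 c p0 w, ell1 c p0 a, ell1 c p0 e;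
            ell2 c p0 u00 u20 w, ell2 c p0 u00 u20 a, ell2 c p0 u00 u20 e;
            w 1, a 1, e 1] : Matrix (Fin 3) (Fin 3) ℝ) = L * X := by
    ext i j
    fin_cases i <;> fin_cases j <;>
      simp [hL, hX, ell1, ell2, Matrix.mul_apply, Fin.sum_univ_three] <;> ring
  have h2 : (!![ell1 c p0 (Z *ᵥ w) - ell1 c p0 w, ell1 c p0 (Z *ᵥ a) - ell1 c p0 a,
          ell1 c p0 (Z *ᵥ e) - ell1 c p0 e;
        ell2 c p0 u00 u20 (Z *ᵥ w) - ell2 c p0 u00 u20 w,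
          ell2 c p0 u00 u20 (Z *ᵥ a) - ell2 c p0 u00 u20 a,
          ell2 c p0 u00 u20 (Z *ᵥ e) - ell2 c p0 u00 u20 e;
        (Z *ᵥ w) 1 - w 1, (Z *ᵥ a) 1 - a 1, (Z *ᵥ e) 1 - e 1] : Matrix (Fin 3) (Fin 3) ℝ)
      = L * ((Z - 1) * X) := by
    ext i j
    fin_cases i <;> fin_cases j <;>
      simp [hL, hX, ell1, ell2, Matrix.mul_apply, mulVec, dotProduct, Fin.sum_univ_three,
        Matrix.one_apply] <;> ring
  rw [h1, h2, det_mul, det_mul, det_mul]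
  ring

lemma tendsto_det_three {F : Filter ℝ} {a b d : Fin 3 → ℝ → ℝ} {a' b' d' : Fin 3 → ℝ}
    (ha : ∀ i, Tendsto (a i) F (𝓝 (a' i))) (hb : ∀ i, Tendsto (b i) F (𝓝 (b' i)))
    (hd : ∀ i, Tendsto (d i) F (𝓝 (d' i))) :
    Tendsto (fun κ => (!![a 0 κ, b 0 κ, d 0 κ; a 1 κ, b 1 κ, d 1 κ; a 2 κ, b 2 κ, d 2 κ] :
        Matrix (Fin 3) (Fin 3) ℝ).det) F
      (𝓝 (!![a' 0, b' 0, d' 0; a' 1, b' 1, d' 1; a' 2, b' 2, d' 2] :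
        Matrix (Fin 3) (Fin 3) ℝ).det) := by
  simp only [det_fin_three, of_apply, cons_val', cons_val_zero, cons_val_one, cons_val]
  exact (((((((ha 0).mul (hb 1)).mul (hd 2)).sub (((ha 0).mul (hd 1)).mul (hb 2))).sub
    (((hb 0).mul (ha 1)).mul (hd 2))).add (((hb 0).mul (hd 1)).mul (ha 2))).add
    (((hd 0).mul (ha 1)).mul (hb 2))).sub (((hd 0).mul (hb 1)).mul (ha 2))

/-- The low-frequency expansion of the Evans function in the scaling `m = κ ν`. -/
lemma tendsto_evans (W : WaveData c T p q u0 u1 u2 u3 A E V tA tE MA ME S)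
    (hY : IsFund c p q Y) (ν : ℝ) :
    Tendsto (fun κ => (Y (κ * ν) κ T - 1).det / κ ^ 3) (𝓝[>] 0)
      (𝓝 (ν * (tA * ME - tE * MA) * ((∫ x in (0:ℝ)..T, u1 x ^ 2) - ν ^ 2 * S))) := by
  have hT := W.T_pos.le
  have hTm : T ∈ Icc 0 T := ⟨hT, le_rfl⟩
  obtain ⟨CA, hCA, bA⟩ := hY.approx_zero W.c_pos W.cont_p W.hq T ν W.solA
  obtain ⟨CE, hCE, bE⟩ := hY.approx_zero W.c_pos W.cont_p W.hq T ν W.solE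
  set U : ℝ → Fin 3 → ℝ := fun x => ![u1 x, u2 x, u3 x] with hU
  have solV : ForcedSol c p q 0 0 (fun x => (U x 2 - U x 0) / c) V := W.solV
  have hUc : ∀ i, Continuous fun x => U x i := W.solU.cont
  obtain ⟨CV, hCV, bV⟩ := hY.approx_translation W.c_pos W.cont_p W.hq T ν W.solU solV
  -- the three families of exact solutions
  set wA : ℝ → ℝ → Fin 3 → ℝ := fun κ x => Y (κ * ν) κ x *ᵥ A 0 with hwA
  set wE : ℝ → ℝ → Fin 3 → ℝ := fun κ x => Y (κ * ν) κ x *ᵥ E 0 with hwE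
  set wV : ℝ → ℝ → Fin 3 → ℝ := fun κ x => Y (κ * ν) κ x *ᵥ (U 0 + (κ * ν) • V 0) with hwV
  have sA : ∀ κ, ForcedSol c p q (κ * ν) κ (fun _ => 0) (wA κ) := fun κ => hY.evolve _ _ _
  have sE : ∀ κ, ForcedSol c p q (κ * ν) κ (fun _ => 0) (wE κ) := fun κ => hY.evolve _ _ _
  have sV : ∀ κ, ForcedSol c p q (κ * ν) κ (fun _ => 0) (wV κ) := fun κ => hY.evolve _ _ _
  have wA0 : ∀ κ, wA κ 0 = A 0 := fun κ => by simp [hwA, hY.at_zero]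
  have wE0 : ∀ κ, wE κ 0 = E 0 := fun κ => by simp [hwE, hY.at_zero]
  have wV0 : ∀ κ, wV κ 0 = U 0 + (κ * ν) • V 0 := fun κ => by simp [hwV, hY.at_zero]
  have lA := fun g hg => tendsto_param hT ν CA hCA (fun κ => (sA κ).cont) W.solA.cont bA g hg
  have lE := fun g hg => tendsto_param hT ν CE hCE (fun κ => (sE κ).cont) W.solE.cont bE g hg
  have lV := fun g hg hgU => tendsto_translation hT ν CV hCV (fun κ => (sV κ).cont) hUc
    solV.cont bV g hg hgU
  have lA1 := lA (fun _ => 1) continuous_const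
  have lA2 := (lA u0 W.cont0).neg
  have lE1 := lE (fun _ => 1) continuous_const
  have lE2 := (lE u0 W.cont0).neg
  have lV1 := lV (fun _ => 1) continuous_const W.integral_u3
  have lV2 := (lV u0 W.cont0 W.integral_u0_u3).neg
  have eV1 : ∫ x in (0:ℝ)..T, (1:ℝ) * (U x 1 + ν ^ 2 * (V x 2 - V x 0)) = 0 :=
    W.integral_second_order ν
  have eV2 : -∫ x in (0:ℝ)..T, u0 x * (U x 1 + ν ^ 2 * (V x 2 - V x 0))
      = (∫ x in (0:ℝ)..T, u1 x ^ 2) - ν ^ 2 * S := W.integral_u0_second_order ν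
  rw [integral_param W.solA ν tA MA _ _ W.jumpA W.massA] at lA1
  rw [integral_param W.solE ν tE ME _ _ W.jumpE W.massE] at lE1
  rw [eV1] at lV1
  rw [eV2] at lV2
  have lA3 : Tendsto (fun κ => wA κ T 1 - A 0 1) (𝓝[>] 0) (𝓝 (-(tA * u2 0))) :=
    tendsto_of_bound _ _ CA fun κ h0 h1 => by
      have := bA κ h0 h1 T hTm 1
      rw [W.jumpA] at this
      convert this using 2; ring
  have lE3 : Tendsto (fun κ => wE κ T 1 - E 0 1) (𝓝[>] 0) (𝓝 (-(tE * u2 0))) :=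
    tendsto_of_bound _ _ CE fun κ h0 h1 => by
      have := bE κ h0 h1 T hTm 1
      rw [W.jumpE] at this
      convert this using 2; ring
  have lV3 : Tendsto (fun κ => (wV κ T 1 - wV κ 0 1) / κ) (𝓝[>] 0) (𝓝 0) :=
    tendsto_of_bound _ _ CV fun κ h0 h1 => by
      have := bV κ h0 h1 T hTm 1
      have e : U T 1 + κ * ν * V T 1 = wV κ 0 1 := by
        rw [wV0, W.perV1]; simp [hU, W.per2]
      rw [e] at this
      rw [sub_zero, abs_div, abs_of_pos h0, div_le_iff₀ h0]
      calc _ ≤ CV * κ ^ 2 := this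
        _ = _ := by ring
  -- the limit of the scaled determinant
  have hN := tendsto_det_three (F := 𝓝[>] (0:ℝ))
    (a := ![_, _, _]) (b := ![_, _, _]) (d := ![_, _, _])
    (a' := ![_, _, _]) (b' := ![_, _, _]) (d' := ![_, _, _])
    (by intro i; fin_cases i; exacts [lV1, lV2, lV3])
    (by intro i; fin_cases i; exacts [lA1, lA2, lA3])
    (by intro i; fin_cases i; exacts [lE1, lE2, lE3])
  -- the limit of the normalising determinant of initial data
  have hw0 : ∀ i, Tendsto (fun κ => (U 0 + (κ * ν) • V 0) i) (𝓝[>] 0) (𝓝 (U 0 i)) := by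
    intro i
    have : Tendsto (fun κ => (U 0 + (κ * ν) • V 0) i) (𝓝 (0:ℝ)) (𝓝 ((U 0 + ((0:ℝ) * ν) • V 0) i)) := by
      apply Continuous.tendsto (f := fun κ : ℝ => (U 0 + (κ * ν) • V 0) i)
      simp only [Pi.add_apply, Pi.smul_apply, smul_eq_mul]
      fun_prop
    simp only [zero_mul, zero_smul, add_zero] at this
    exact this.mono_left nhdsWithin_le_nhds
  have hd := tendsto_det_three (F := 𝓝[>] (0:ℝ))
    (a := ![fun κ => ell1 c (p 0) (U 0 + (κ * ν) • V 0),
      fun κ => ell2 c (p 0) (u0 0) (u2 0) (U 0 + (κ * ν) • V 0),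
      fun κ => (U 0 + (κ * ν) • V 0) 1])
    (b := ![fun _ => ell1 c (p 0) (A 0), fun _ => ell2 c (p 0) (u0 0) (u2 0) (A 0), fun _ => A 0 1])
    (d := ![fun _ => ell1 c (p 0) (E 0), fun _ => ell2 c (p 0) (u0 0) (u2 0) (E 0), fun _ => E 0 1])
    (a' := ![ell1 c (p 0) (U 0), ell2 c (p 0) (u0 0) (u2 0) (U 0), U 0 1])
    (b' := ![ell1 c (p 0) (A 0), ell2 c (p 0) (u0 0) (u2 0) (A 0), A 0 1])
    (d' := ![ell1 c (p 0) (E 0), ell2 c (p 0) (u0 0) (u2 0) (E 0), E 0 1])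
    (by
      intro i; fin_cases i
      · exact ((hw0 2).const_mul c).sub ((hw0 0).const_mul (p 0))
      · exact (((hw0 0).const_mul (c * u2 0)).neg).sub
          ((((hw0 2).const_mul c).sub ((hw0 0).const_mul (p 0))).const_mul (u0 0))
      · exact hw0 1)
    (by intro i; fin_cases i <;> exact tendsto_const_nhds)
    (by intro i; fin_cases i <;> exact tendsto_const_nhds)
  have hu30 : u3 0 = 0 := by
    have := W.h3 0
    rw [W.u1_zero, mul_zero] at this
    exact (mul_eq_zero.1 this).resolve_left W.c_pos.ne'
  have vd : (!![ell1 c (p 0) (U 0), ell1 c (p 0) (A 0), ell1 c (p 0) (E 0);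
      ell2 c (p 0) (u0 0) (u2 0) (U 0), ell2 c (p 0) (u0 0) (u2 0) (A 0),
        ell2 c (p 0) (u0 0) (u2 0) (E 0); U 0 1, A 0 1, E 0 1] :
      Matrix (Fin 3) (Fin 3) ℝ).det = u2 0 := by
    have x1 : ell1 c (p 0) (U 0) = 0 := by simp [ell1, hU, W.u1_zero, hu30]
    have x2 : ell2 c (p 0) (u0 0) (u2 0) (U 0) = 0 := by simp [ell2, hU, W.u1_zero, hu30]
    have x3 : ell1 c (p 0) (A 0) = 1 := W.ellA
    have x4 : ell1 c (p 0) (E 0) = 0 := W.ellE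
    have x5 : ell2 c (p 0) (u0 0) (u2 0) (E 0) = 1 := by
      rw [ell2, W.ellE, W.energyE]; ring
    rw [x1, x2, x3, x4, x5, det_fin_three]
    simp [hU]
  have hd' : Tendsto (fun κ => (!![ell1 c (p 0) (wV κ 0), ell1 c (p 0) (A 0), ell1 c (p 0) (E 0);
      ell2 c (p 0) (u0 0) (u2 0) (wV κ 0), ell2 c (p 0) (u0 0) (u2 0) (A 0),
        ell2 c (p 0) (u0 0) (u2 0) (E 0); wV κ 0 1, A 0 1, E 0 1] :
      Matrix (Fin 3) (Fin 3) ℝ).det) (𝓝[>] 0) (𝓝 (u2 0)) := by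
    simp only [wV0]; exact hd.trans (le_of_eq (congrArg 𝓝 vd))
  refine Tendsto.congr' ?_ ((hN.div hd' W.u2_ne).trans (le_of_eq ?_))
  · have hne := hd'.eventually_ne W.u2_ne
    filter_upwards [self_mem_nhdsWithin, hne] with κ hκ hκne
    have hκ0 : κ ≠ 0 := ne_of_gt hκ
    have id := det_identity c (p 0) (u0 0) (u2 0) (Y (κ * ν) κ T) (wV κ 0) (A 0) (E 0)
    have j1 := W.jump_ell1 (sV κ)
    have j2 := W.jump_ell2 (sV κ)
    have j3 := W.jump_ell1 (sA κ)
    have j4 := W.jump_ell2 (sA κ)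
    have j5 := W.jump_ell1 (sE κ)
    have j6 := W.jump_ell2 (sE κ)
    have k1 : Y (κ * ν) κ T *ᵥ wV κ 0 = wV κ T := by rw [wV0]
    have k2 : Y (κ * ν) κ T *ᵥ A 0 = wA κ T := rfl
    have k3 : Y (κ * ν) κ T *ᵥ E 0 = wE κ T := rfl
    rw [wA0] at j3 j4
    rw [wE0] at j5 j6
    rw [k1, k2, k3, j1, j2, j3, j4, j5, j6] at id
    rw [Pi.div_apply, div_eq_div_iff hκne (pow_ne_zero 3 hκ0), ← id]
    clear id hκne
    simp only [det_fin_three, of_apply, cons_val', cons_val_zero, cons_val_one, cons_val, one_mul]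
    field_simp
  · congr 1
    simp only [det_fin_three, of_apply, cons_val', cons_val_zero, cons_val_one, cons_val]
    have := W.u2_ne
    field_simp
    ring

/-! ### Existence of a positive root -/

lemma integral_sq_pos (W : WaveData c T p q u0 u1 u2 u3 A E V tA tE MA ME S) :
    0 < ∫ x in (0:ℝ)..T, u1 x ^ 2 := by
  have d1 := W.cont1
  apply intervalIntegral.integral_pos W.T_pos (by fun_prop) (fun x _ => sq_nonneg _)
  by_contra! hcon
  -- otherwise `u'` vanishes to the right of `0`, against `u''(0) ≠ 0`
  apply W.u2_ne
  have hz : ∀ x ∈ Icc 0 T, u1 x = 0 := fun x hx =>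
    pow_eq_zero_iff (n := 2) two_ne_zero |>.1 (le_antisymm (hcon x hx) (sq_nonneg _))
  have hT : (0:ℝ) ∈ Icc 0 T := ⟨le_rfl, W.T_pos.le⟩
  have e1 : HasDerivWithinAt u1 (u2 0) (Icc 0 T) 0 := (W.h1 0).hasDerivWithinAt
  have e2 : HasDerivWithinAt u1 0 (Icc 0 T) 0 :=
    (hasDerivWithinAt_const 0 (Icc 0 T) (0:ℝ)).congr hz (hz 0 hT)
  exact (uniqueDiffOn_Icc W.T_pos 0 hT).eq_deriv _ e1 e2

/-- The scaled Evans function has opposite signs at two values of `ν`, so the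
intermediate value theorem gives a positive root. -/
theorem exists_root (W : WaveData c T p q u0 u1 u2 u3 A E V tA tE MA ME S)
    (hY : IsFund c p q Y) :
    ∃ k₀ > 0, ∀ κ, 0 < κ → κ < k₀ → ∃ m > 0, (Y m κ T - 1).det = 0 := by
  set I := ∫ x in (0:ℝ)..T, u1 x ^ 2 with hI
  have hIpos : 0 < I := W.integral_sq_pos
  have hS := W.S_pos
  have hK := W.K_pos
  set s := Real.sqrt (I / S) with hs
  have hspos : 0 < s := Real.sqrt_pos.2 (by positivity)
  have hs2 : s ^ 2 * S = I := by rw [hs, Real.sq_sqrt (by positivity)]; field_simp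
  have t1 := W.tendsto_evans hY (s / 2)
  have t2 := W.tendsto_evans hY (2 * s)
  have p1 : 0 < s / 2 * (tA * ME - tE * MA) * (I - (s / 2) ^ 2 * S) := by
    have : 0 < I - (s / 2) ^ 2 * S := by nlinarith
    positivity
  have p2 : 2 * s * (tA * ME - tE * MA) * (I - (2 * s) ^ 2 * S) < 0 := by
    have : I - (2 * s) ^ 2 * S < 0 := by nlinarith
    exact mul_neg_of_pos_of_neg (by positivity) this
  have ev := (t1.eventually_const_lt p1).and (t2.eventually_lt_const p2)
  rw [eventually_nhdsWithin_iff, Metric.eventually_nhds_iff] at ev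
  obtain ⟨k₀, hk₀, hev⟩ := ev
  refine ⟨k₀, hk₀, fun κ hκ hκk => ?_⟩
  obtain ⟨g1, g2⟩ := hev (by simpa [Real.dist_eq, abs_of_pos hκ] using hκk) hκ
  have hκ3 : 0 < κ ^ 3 := by positivity
  have g1' : 0 < (Y (κ * (s / 2)) κ T - 1).det := by
    have := mul_pos g1 hκ3
    rwa [div_mul_cancel₀ _ hκ3.ne'] at this
  have g2' : (Y (κ * (2 * s)) κ T - 1).det < 0 := by
    have := mul_neg_of_neg_of_pos g2 hκ3
    rwa [div_mul_cancel₀ _ hκ3.ne'] at this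
  have hcont := hY.continuous_det W.c_pos W.cont_p W.hq W.T_pos.le κ
  have hle : κ * (s / 2) ≤ κ * (2 * s) := by gcongr; linarith
  obtain ⟨m, hm, hm0⟩ := intermediate_value_Icc' hle hcont.continuousOn ⟨g2'.le, g1'.le⟩
  exact ⟨m, lt_of_lt_of_le (by positivity) hm.1, hm0⟩

end WaveData

/-! ### Partial derivatives and the Leibniz rule -/

/-- Partial derivative with respect to the first (spatial) variable. -/
noncomputable def dX (g : ℝ × ℝ → ℝ) (z : ℝ × ℝ) : ℝ := fderiv ℝ g z (1, 0)

/-- Partial derivative with respect to the second (parameter) variable. -/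
noncomputable def dS (g : ℝ × ℝ → ℝ) (z : ℝ × ℝ) : ℝ := fderiv ℝ g z (0, 1)

section Partials
variable {g : ℝ × ℝ → ℝ} {x s : ℝ}

lemma hasDerivAt_dX (h : DifferentiableAt ℝ g (x, s)) :
    HasDerivAt (fun y => g (y, s)) (dX g (x, s)) x :=
  h.hasFDerivAt.comp_hasDerivAt x ((hasDerivAt_id x).prodMk (hasDerivAt_const x s))

lemma hasDerivAt_dS (h : DifferentiableAt ℝ g (x, s)) :
    HasDerivAt (fun t => g (x, t)) (dS g (x, s)) s :=
  h.hasFDerivAt.comp_hasDerivAt s ((hasDerivAt_const s x).prodMk (hasDerivAt_id s))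

lemma hasDerivAt_curve {τ : ℝ → ℝ} {τ' y : ℝ} (hτ : HasDerivAt τ τ' s) (hy : τ s = y)
    (h : DifferentiableAt ℝ g (y, s)) :
    HasDerivAt (fun t => g (τ t, t)) (τ' * dX g (y, s) + dS g (y, s)) s := by
  have hd : HasFDerivAt g (fderiv ℝ g (y, s)) ((fun t => (τ t, t)) s) := by
    simpa [hy] using h.hasFDerivAt
  refine (hd.comp_hasDerivAt (f := fun t => (τ t, t)) s (hτ.prodMk (hasDerivAt_id s))).congr_deriv ?_
  have : ((τ', 1) : ℝ × ℝ) = τ' • (1, 0) + (0, 1) := by ext <;> simp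
  rw [this, map_add, map_smul]; rfl

lemma contDiffAt_dX {n m : WithTop ℕ∞} {z : ℝ × ℝ} (h : ContDiffAt ℝ n g z) (hmn : m + 1 ≤ n) :
    ContDiffAt ℝ m (dX g) z :=
  (h.fderiv_right hmn).clm_apply contDiffAt_const

lemma contDiffAt_dS {n m : WithTop ℕ∞} {z : ℝ × ℝ} (h : ContDiffAt ℝ n g z) (hmn : m + 1 ≤ n) :
    ContDiffAt ℝ m (dS g) z :=
  (h.fderiv_right hmn).clm_apply contDiffAt_const

lemma dX_dS {z : ℝ × ℝ} (h : ContDiffAt ℝ 2 g z) : dX (dS g) z = dS (dX g) z := by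
  have hsymm : IsSymmSndFDerivAt ℝ g z := h.isSymmSndFDerivAt (by simp)
  have hd : DifferentiableAt ℝ (fderiv ℝ g) z :=
    (h.fderiv_right (m := 1) (by norm_num)).differentiableAt (by norm_num)
  have e (v w : ℝ × ℝ) : fderiv ℝ (fun z => fderiv ℝ g z v) z w = fderiv ℝ (fderiv ℝ g) z w v := by
    rw [fderiv_clm_apply hd (differentiableAt_const v)]
    simp
  exact (e (0, 1) (1, 0)).trans ((hsymm _ _).trans (e (1, 0) (0, 1)).symm)

end Partials

/-- Leibniz rule with a moving upper endpoint. -/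
lemma hasDerivAt_integral_moving {h : ℝ × ℝ → ℝ} {J : Set ℝ} {s₀ : ℝ} (hJ : J ∈ 𝓝 s₀)
    (hh : ∀ x, ∀ s ∈ J, ContDiffAt ℝ 1 h (x, s)) {τ : ℝ → ℝ} {τ' T : ℝ} (hT : τ s₀ = T)
    (hτ : HasDerivAt τ τ' s₀) :
    HasDerivAt (fun s => ∫ x in (0:ℝ)..τ s, h (x, s))
      (τ' * h (T, s₀) + ∫ x in (0:ℝ)..T, dS h (x, s₀)) s₀ := by
  have hs0 : s₀ ∈ J := mem_of_mem_nhds hJ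
  have hcx (s : ℝ) (hs : s ∈ J) : Continuous fun x => h (x, s) :=
    continuous_iff_continuousAt.2 fun x =>
      (hasDerivAt_dX ((hh x s hs).differentiableAt one_ne_zero)).continuousAt
  have hdS (z : ℝ × ℝ) (hz : z.2 ∈ J) : ContinuousAt (dS h) z :=
    (contDiffAt_dS (m := 0) (hh z.1 z.2 hz) (by norm_num)).continuousAt
  obtain ⟨δ, hδ, hball⟩ := Metric.nhds_basis_closedBall.mem_iff.1 hJ

  have fixed : HasDerivAt (fun s => ∫ x in (0:ℝ)..T, h (x, s))
      (∫ x in (0:ℝ)..T, dS h (x, s₀)) s₀ := by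
    have hK : IsCompact (uIcc 0 T ×ˢ Metric.closedBall s₀ δ) :=
      isCompact_uIcc.prod (isCompact_closedBall _ _)
    obtain ⟨B, hB⟩ := hK.exists_bound_of_continuousOn (f := dS h)
      fun z hz => (hdS z (hball hz.2)).continuousWithinAt
    refine (intervalIntegral.hasDerivAt_integral_of_dominated_loc_of_deriv_le
      (F := fun s x => h (x, s)) (F' := fun s x => dS h (x, s)) (bound := fun _ => B)
      (Metric.closedBall_mem_nhds s₀ hδ) ?_ ((hcx s₀ hs0).intervalIntegrable _ _) ?_ ?_
      intervalIntegrable_const ?_).2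
    · filter_upwards [hJ] with s hs using (hcx s hs).aestronglyMeasurable
    · have : Continuous fun x => dS h (x, s₀) := continuous_iff_continuousAt.2 fun x =>
        (hdS (x, s₀) hs0).comp (f := fun x : ℝ => (x, s₀)) (by fun_prop)
      exact this.aestronglyMeasurable
    · exact Eventually.of_forall fun t ht s hs => hB (t, s) ⟨uIoc_subset_uIcc ht, hs⟩
    · exact Eventually.of_forall fun t ht s hs =>
        hasDerivAt_dS ((hh t s (hball hs)).differentiableAt one_ne_zero)
  -- endpoint motion at the frozen parameter
  have moving : HasDerivAt (fun s => ∫ x in T..τ s, h (x, s₀)) (τ' * h (T, s₀)) s₀ := by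
    have h1 : HasDerivAt (fun y => ∫ x in T..y, h (x, s₀)) (h (T, s₀)) (τ s₀) := by
      rw [hT]
      exact intervalIntegral.integral_hasDerivAt_right ((hcx s₀ hs0).intervalIntegrable _ _)
        ((hcx s₀ hs0).stronglyMeasurableAtFilter _ _) (hcx s₀ hs0).continuousAt
    exact (h1.comp s₀ hτ).congr_deriv (mul_comm _ _)
  -- the mixed term is of second order
  have mixed : HasDerivAt (fun s => ∫ x in T..τ s, (h (x, s) - h (x, s₀))) 0 s₀ := by
    rw [hasDerivAt_iff_isLittleO]
    have hO : (fun s => τ s - T) =O[𝓝 s₀] fun s => s - s₀ := by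
      simpa [hT] using hτ.isBigO_sub
    have ho : (fun s => ∫ x in T..τ s, (h (x, s) - h (x, s₀))) =o[𝓝 s₀] fun s => τ s - T := by
      rw [Asymptotics.isLittleO_iff]
      intro ε hε
      have c1 : ContinuousAt h (T, s₀) := (hh T s₀ hs0).continuousAt
      have ev : ∀ᶠ z in 𝓝 (T, s₀), |h z - h (T, s₀)| < ε / 2 := by
        have := c1.eventually (Metric.ball_mem_nhds _ (half_pos hε))
        simpa [Real.dist_eq] using this
      obtain ⟨r, hr, hev⟩ := Metric.eventually_nhds_iff.1 ev
      have hτr : ∀ᶠ s in 𝓝 s₀, dist (τ s) T < r := by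
        have := hτ.continuousAt.eventually (Metric.ball_mem_nhds _ hr)
        simpa [hT] using this
      filter_upwards [hτr, Metric.ball_mem_nhds s₀ hr] with s h1 h2
      refine (intervalIntegral.norm_integral_le_of_norm_le_const (C := ε) fun x hx => ?_)
      have hx' : dist x T < r := by
        rw [Real.dist_eq] at h1 ⊢
        exact (abs_sub_left_of_mem_uIcc (uIoc_subset_uIcc hx)).trans_lt h1
      have a1 := hev (y := (x, s)) (by rw [Prod.dist_eq]; exact max_lt hx' h2)
      have a2 := hev (y := (x, s₀)) (by rw [Prod.dist_eq, dist_self]; exact max_lt hx' hr)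
      rw [Real.norm_eq_abs]
      rw [abs_lt] at a1 a2
      rw [abs_le]; constructor <;> linarith [a1.1, a1.2, a2.1, a2.2]
    simpa [hT] using ho.trans_isBigO hO
  refine (((fixed.add moving).add mixed).congr_deriv (by ring)).congr_of_eventuallyEq ?_
  filter_upwards [hJ] with s hs
  have i1 := (hcx s hs).intervalIntegrable (μ := volume)
  have i2 := (hcx s₀ hs0).intervalIntegrable (μ := volume)
  simp only [Pi.add_apply]
  rw [intervalIntegral.integral_sub (i1 _ _) (i2 _ _),
    ← intervalIntegral.integral_add_adjacent_intervals (i1 0 T) (i1 T (τ s))]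
  ring

/-! ### Variation of the wave along a curve of parameters -/

/-- A one-parameter curve `s ↦ (α s, η s, γ s)` of wave parameters together with the waves
`g (·, s)` and periods `τ s` along it, near a base parameter `s₀` at which the wave is `u₀`.
The numbers `d1, d2, d3, τ'` are the velocities of `α, η, γ, τ` at `s₀`. -/
structure Slice (f F : ℝ → ℝ) (g : ℝ × ℝ → ℝ) (J : Set ℝ) (s₀ : ℝ) (u₀ α η γ τ : ℝ → ℝ)
    (d1 d2 d3 τ' : ℝ) : Prop where
  hJ : J ∈ 𝓝 s₀
  smooth : ∀ x, ∀ s ∈ J, ContDiffAt ℝ 3 g (x, s)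
  base : ∀ x, g (x, s₀) = u₀ x
  profile : ∀ s ∈ J, ∀ x, γ s * dX (dX g) (x, s) = (γ s - 1) * g (x, s) - f (g (x, s)) + α s
  energy : ∀ s ∈ J, F (g (0, s)) - (γ s - 1) / 2 * g (0, s) ^ 2 - α s * g (0, s) = η s
  periodic : ∀ s ∈ J, ∀ x, g (x + τ s, s) = g (x, s)
  at_zero : ∀ s ∈ J, dX g (0, s) = 0
  hα : HasDerivAt α d1 s₀
  hη : HasDerivAt η d2 s₀
  hγ : HasDerivAt γ d3 s₀
  hτ : HasDerivAt τ τ' s₀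
  γ_pos : 0 < γ s₀

namespace Slice
variable {f F : ℝ → ℝ} {g : ℝ × ℝ → ℝ} {J : Set ℝ} {s₀ : ℝ} {u₀ α η γ τ : ℝ → ℝ}
  {d1 d2 d3 τ' : ℝ}

lemma mem (S : Slice f F g J s₀ u₀ α η γ τ d1 d2 d3 τ') : s₀ ∈ J := mem_of_mem_nhds S.hJ

lemma smooth1 (S : Slice f F g J s₀ u₀ α η γ τ d1 d2 d3 τ') (x : ℝ) {s : ℝ} (hs : s ∈ J) :
    ContDiffAt ℝ 2 (dX g) (x, s) := contDiffAt_dX (S.smooth x s hs) (by norm_num)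

lemma smooth2 (S : Slice f F g J s₀ u₀ α η γ τ d1 d2 d3 τ') (x : ℝ) {s : ℝ} (hs : s ∈ J) :
    ContDiffAt ℝ 1 (dX (dX g)) (x, s) := contDiffAt_dX (S.smooth1 x hs) (by norm_num)

lemma diff0 (S : Slice f F g J s₀ u₀ α η γ τ d1 d2 d3 τ') (x : ℝ) {s : ℝ} (hs : s ∈ J) :
    DifferentiableAt ℝ g (x, s) := (S.smooth x s hs).differentiableAt (by norm_num)

lemma diff1 (S : Slice f F g J s₀ u₀ α η γ τ d1 d2 d3 τ') (x : ℝ) {s : ℝ} (hs : s ∈ J) :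
    DifferentiableAt ℝ (dX g) (x, s) := (S.smooth1 x hs).differentiableAt (by norm_num)

lemma diff2 (S : Slice f F g J s₀ u₀ α η γ τ d1 d2 d3 τ') (x : ℝ) {s : ℝ} (hs : s ∈ J) :
    DifferentiableAt ℝ (dX (dX g)) (x, s) := (S.smooth2 x hs).differentiableAt (by norm_num)

lemma has0 (S : Slice f F g J s₀ u₀ α η γ τ d1 d2 d3 τ') (x : ℝ) :
    HasDerivAt u₀ (dX g (x, s₀)) x := by
  simpa only [S.base] using hasDerivAt_dX (S.diff0 x S.mem)

lemma eq1 (S : Slice f F g J s₀ u₀ α η γ τ d1 d2 d3 τ') (x : ℝ) :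
    dX g (x, s₀) = deriv u₀ x := (S.has0 x).deriv.symm

lemma has1 (S : Slice f F g J s₀ u₀ α η γ τ d1 d2 d3 τ') (x : ℝ) :
    HasDerivAt (deriv u₀) (dX (dX g) (x, s₀)) x := by
  simpa only [S.eq1] using hasDerivAt_dX (S.diff1 x S.mem)

lemma eq2 (S : Slice f F g J s₀ u₀ α η γ τ d1 d2 d3 τ') (x : ℝ) :
    dX (dX g) (x, s₀) = deriv (deriv u₀) x := (S.has1 x).deriv.symm

lemma has2 (S : Slice f F g J s₀ u₀ α η γ τ d1 d2 d3 τ') (x : ℝ) :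
    HasDerivAt (deriv (deriv u₀)) (deriv (deriv (deriv u₀)) x) x := by
  have := hasDerivAt_dX (S.diff2 x S.mem)
  simp only [S.eq2] at this
  exact this.deriv ▸ this

/-- The jet in `x` of the variation of the wave along the curve. -/
noncomputable def jet (g : ℝ × ℝ → ℝ) (s₀ : ℝ) (x : ℝ) : Fin 3 → ℝ :=
  ![dS g (x, s₀), dS (dX g) (x, s₀), dS (dX (dX g)) (x, s₀)]

/-- The linearised profile equation satisfied by the variation. -/
lemma ell (S : Slice f F g J s₀ u₀ α η γ τ d1 d2 d3 τ') (hf : Differentiable ℝ f) (x : ℝ) :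
    γ s₀ * jet g s₀ x 2 - (γ s₀ - 1 - deriv f (u₀ x)) * jet g s₀ x 0
      = d1 + d3 * (u₀ x - deriv (deriv u₀) x) := by
  have h0 := hasDerivAt_dS (S.diff0 x S.mem)
  have h2 := hasDerivAt_dS (S.diff2 x S.mem)
  have hfg := (hf (g (x, s₀))).hasDerivAt.comp s₀ h0
  have L := S.hγ.mul h2
  have R := ((((S.hγ.sub_const 1).mul h0).sub hfg).add S.hα)
  have LR := L.unique (R.congr_of_eventuallyEq (by
    filter_upwards [S.hJ] with s hs using S.profile s hs x))
  simp only [S.base, S.eq2] at LR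
  simp only [jet, Matrix.cons_val]
  linarith

lemma jet_sol (S : Slice f F g J s₀ u₀ α η γ τ d1 d2 d3 τ') (hf : ContDiff ℝ 3 f) :
    ForcedSol (γ s₀) (fun x => γ s₀ - 1 - deriv f (u₀ x))
      (fun x => deriv (deriv f) (u₀ x) * deriv u₀ x) 0 0
      (fun x => d3 * (deriv u₀ x - deriv (deriv (deriv u₀)) x) / γ s₀) (jet g s₀) where
  d0 x := by
    have := hasDerivAt_dX ((contDiffAt_dS (m := 2) (S.smooth x s₀ S.mem)
      (by norm_num)).differentiableAt (by norm_num))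
    rwa [dX_dS ((S.smooth x s₀ S.mem).of_le (by norm_num))] at this
  d1 x := by
    have := hasDerivAt_dX ((contDiffAt_dS (m := 1) (S.smooth1 x S.mem)
      (by norm_num)).differentiableAt (by norm_num))
    rwa [dX_dS (S.smooth1 x S.mem)] at this
  d2 x := by
    have hf1 : Differentiable ℝ f := hf.differentiable (by norm_num)
    have hf2 : Differentiable ℝ (deriv f) :=
      (hf.of_le (by norm_num : (2 : WithTop ℕ∞) ≤ 3)).differentiable_deriv_two
    have e : (fun y => jet g s₀ y 2) = fun y => ((γ s₀ - 1 - deriv f (u₀ y)) * dS g (y, s₀)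
        + (d1 + d3 * (u₀ y - deriv (deriv u₀) y))) / γ s₀ := by
      funext y
      rw [eq_div_iff S.γ_pos.ne', ← S.ell hf1 y]
      simp only [jet, Matrix.cons_val]; ring
    rw [e]
    have hA := hasDerivAt_dX ((contDiffAt_dS (m := 2) (S.smooth x s₀ S.mem)
      (by norm_num)).differentiableAt (by norm_num))
    rw [dX_dS ((S.smooth x s₀ S.mem).of_le (by norm_num))] at hA
    have hu := S.has0 x
    rw [S.eq1] at hu
    have hp := ((hf2 (u₀ x)).hasDerivAt.comp x hu).const_sub (γ s₀ - 1)
    refine (((hp.mul hA).add (((hu.sub (S.has2 x)).const_mul d3).const_add d1)).div_const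
      (γ s₀)).congr_deriv ?_
    simp only [jet, Matrix.cons_val, Function.comp_apply]
    ring

lemma period (S : Slice f F g J s₀ u₀ α η γ τ d1 d2 d3 τ') (x : ℝ) : u₀ (x + τ s₀) = u₀ x := by
  simpa only [S.base] using S.periodic s₀ S.mem x

lemma period1 (S : Slice f F g J s₀ u₀ α η γ τ d1 d2 d3 τ') {s : ℝ} (hs : s ∈ J) (x : ℝ) :
    dX g (x + τ s, s) = dX g (x, s) := by
  have h := (hasDerivAt_dX (S.diff0 (x + τ s) hs)).comp_add_const x (τ s)
  simp only [S.periodic s hs] at h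
  exact h.unique (hasDerivAt_dX (S.diff0 x hs))

lemma deriv_zero (S : Slice f F g J s₀ u₀ α η γ τ d1 d2 d3 τ') : deriv u₀ 0 = 0 := by
  rw [← S.eq1, S.at_zero s₀ S.mem]

lemma deriv_T (S : Slice f F g J s₀ u₀ α η γ τ d1 d2 d3 τ') : deriv u₀ (τ s₀) = 0 := by
  have := S.period1 S.mem 0
  rwa [zero_add, S.eq1, S.eq1, S.deriv_zero] at this

lemma deriv2_T (S : Slice f F g J s₀ u₀ α η γ τ d1 d2 d3 τ') :
    deriv (deriv u₀) (τ s₀) = deriv (deriv u₀) 0 := by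
  have h1 := S.profile s₀ S.mem (τ s₀)
  have h2 := S.profile s₀ S.mem 0
  have h3 := S.period 0
  rw [zero_add] at h3
  rw [S.base, h3, ← S.base 0, ← h2, S.eq2, S.eq2] at h1
  exact mul_left_cancel₀ S.γ_pos.ne' h1

lemma jump0 (S : Slice f F g J s₀ u₀ α η γ τ d1 d2 d3 τ') :
    jet g s₀ (τ s₀) 0 = jet g s₀ 0 0 := by
  have h1 := hasDerivAt_curve S.hτ rfl (S.diff0 (τ s₀) S.mem)
  have h2 := hasDerivAt_dS (S.diff0 0 S.mem)
  have := h1.unique (h2.congr_of_eventuallyEq (by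
    filter_upwards [S.hJ] with s hs
    simpa using S.periodic s hs 0))
  rw [S.eq1, S.deriv_T, mul_zero, zero_add] at this
  exact this

/-- Since the period varies along the curve, the variation of the wave is not periodic: its
derivative jumps by a multiple of `u''(0)`. -/
lemma jump1 (S : Slice f F g J s₀ u₀ α η γ τ d1 d2 d3 τ') :
    jet g s₀ (τ s₀) 1 = jet g s₀ 0 1 - τ' * deriv (deriv u₀) 0 := by
  have h1 := hasDerivAt_curve S.hτ rfl (S.diff1 (τ s₀) S.mem)
  have h2 := hasDerivAt_dS (S.diff1 0 S.mem)
  have := h1.unique (h2.congr_of_eventuallyEq (by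
    filter_upwards [S.hJ] with s hs
    simpa using S.period1 hs 0))
  rw [S.eq2, S.deriv2_T] at this
  simp only [jet, Matrix.cons_val]
  linarith

/-- The variation of the energy relation at `x = 0`, where `u'` vanishes along the whole curve. -/
lemma energy_var (S : Slice f F g J s₀ u₀ α η γ τ d1 d2 d3 τ') (hF : ∀ s, HasDerivAt F (f s) s) :
    -(γ s₀ * deriv (deriv u₀) 0 * jet g s₀ 0 0) - d3 / 2 * u₀ 0 ^ 2 - d1 * u₀ 0 = d2 := by
  have h0 := hasDerivAt_dS (S.diff0 0 S.mem)
  have L := (((hF (g (0, s₀))).comp s₀ h0).sub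
    (((S.hγ.sub_const 1).div_const 2).mul (h0.pow 2))).sub (S.hα.mul h0)
  have LR := (L.congr_of_eventuallyEq (f₁ := η) (by
    filter_upwards [S.hJ] with s hs using (S.energy s hs).symm)).unique S.hη
  have pr := S.profile s₀ S.mem 0
  simp only [S.base, S.eq2] at LR pr
  simp only [jet, Matrix.cons_val]
  rw [pr, ← LR, Pi.pow_apply, S.base]
  simp
  ring

lemma mass (S : Slice f F g J s₀ u₀ α η γ τ d1 d2 d3 τ') :
    HasDerivAt (fun s => ∫ x in (0:ℝ)..τ s, g (x, s))
      (τ' * u₀ 0 + ∫ x in (0:ℝ)..τ s₀, jet g s₀ x 0) s₀ := by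
  have := hasDerivAt_integral_moving S.hJ
    (fun x s hs => (S.smooth x s hs).of_le (by norm_num)) rfl S.hτ
  have h3 := S.period 0
  rw [zero_add] at h3
  rw [S.base, h3] at this
  exact this

lemma momentum (S : Slice f F g J s₀ u₀ α η γ τ d1 d2 d3 τ') (hf : ContDiff ℝ 3 f) :
    HasDerivAt (fun s => (1 / 2) * ∫ x in (0:ℝ)..τ s, (g (x, s) ^ 2 + dX g (x, s) ^ 2))
      (1 / 2 * τ' * u₀ 0 ^ 2
        + ∫ x in (0:ℝ)..τ s₀, jet g s₀ x 0 * (u₀ x - deriv (deriv u₀) x)) s₀ := by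
  have sol := S.jet_sol hf
  have hm := (hasDerivAt_integral_moving (h := fun z => g z ^ 2 + dX g z ^ 2) S.hJ
    (fun x s hs => ((S.smooth x s hs).of_le (by norm_num)).pow 2 |>.add
      (((S.smooth1 x hs).of_le (by norm_num)).pow 2)) rfl S.hτ).const_mul (1 / 2)
  refine hm.congr_deriv ?_
  have h3 := S.period 0
  rw [zero_add] at h3
  have c0 : Continuous u₀ := continuous_iff_continuousAt.2 fun x => (S.has0 x).continuousAt
  have c1 : Continuous (deriv u₀) := continuous_iff_continuousAt.2 fun x => (S.has1 x).continuousAt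
  have c2 : Continuous (deriv (deriv u₀)) :=
    continuous_iff_continuousAt.2 fun x => (S.has2 x).continuousAt
  have e (x : ℝ) : dS (fun z => g z ^ 2 + dX g z ^ 2) (x, s₀)
      = 2 * (u₀ x * jet g s₀ x 0) + 2 * (deriv u₀ x * jet g s₀ x 1) := by
    have hd : DifferentiableAt ℝ (fun z => g z ^ 2 + dX g z ^ 2) (x, s₀) :=
      ((S.diff0 x S.mem).pow 2).add ((S.diff1 x S.mem).pow 2)
    refine (hasDerivAt_dS hd).unique ((((hasDerivAt_dS (S.diff0 x S.mem)).pow 2).add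
      ((hasDerivAt_dS (S.diff1 x S.mem)).pow 2)).congr_deriv ?_)
    simp only [S.base, S.eq1, jet, Matrix.cons_val]
    simp; ring
  have parts : ∫ x in (0:ℝ)..τ s₀, deriv u₀ x * jet g s₀ x 1
      = -∫ x in (0:ℝ)..τ s₀, deriv (deriv u₀) x * jet g s₀ x 0 := by
    rw [intervalIntegral.integral_mul_deriv_eq_deriv_mul (u := deriv u₀)
      (u' := deriv (deriv u₀)) (v := fun x => jet g s₀ x 0)
      (fun x _ => by have := S.has1 x; rwa [S.eq2] at this) (fun x _ => sol.d0 x)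
      (c2.intervalIntegrable _ _) ((sol.cont 1).intervalIntegrable _ _),
      S.deriv_T, S.deriv_zero]
    ring
  have i1 : IntervalIntegrable (fun x => u₀ x * jet g s₀ x 0) volume 0 (τ s₀) :=
    (c0.mul (sol.cont 0)).intervalIntegrable _ _
  have i2 : IntervalIntegrable (fun x => deriv u₀ x * jet g s₀ x 1) volume 0 (τ s₀) :=
    (c1.mul (sol.cont 1)).intervalIntegrable _ _
  have i3 : IntervalIntegrable (fun x => deriv (deriv u₀) x * jet g s₀ x 0) volume 0 (τ s₀) :=
    (c2.mul (sol.cont 0)).intervalIntegrable _ _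
  simp only [e, S.base, S.eq1, h3, S.deriv_T]
  rw [intervalIntegral.integral_add (i1.const_mul 2) (i2.const_mul 2),
    intervalIntegral.integral_const_mul, intervalIntegral.integral_const_mul, parts]
  have : ∫ x in (0:ℝ)..τ s₀, jet g s₀ x 0 * (u₀ x - deriv (deriv u₀) x)
      = (∫ x in (0:ℝ)..τ s₀, u₀ x * jet g s₀ x 0)
        - ∫ x in (0:ℝ)..τ s₀, deriv (deriv u₀) x * jet g s₀ x 0 := by
    rw [← intervalIntegral.integral_sub i1 i3]
    exact intervalIntegral.integral_congr fun x _ => by ring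
  rw [this]
  ring

end Slice

/-! ### Period, mass and momentum variations -/

/-- Variations of the wave in the directions `a` and `E`, and the combination of all three
variations that leaves period and mass stationary, assemble into `WaveData`. -/
lemma waveData_of_slices {f F : ℝ → ℝ} (hf : ContDiff ℝ 3 f) (hF : ∀ s, HasDerivAt F (f s) s)
    {u₀ : ℝ → ℝ} {a E c T : ℝ} {gA gE gC : ℝ × ℝ → ℝ} {JA JE JC : Set ℝ} {τA τE τC : ℝ → ℝ}
    {tA tE tC mA mE mC pA pE pC : ℝ}
    (SA : Slice f F gA JA a u₀ (fun s => s) (fun _ => E) (fun _ => c) τA 1 0 0 tA)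
    (SE : Slice f F gE JE E u₀ (fun _ => a) (fun s => s) (fun _ => c) τE 0 1 0 tE)
    (SC : Slice f F gC JC c u₀ (fun _ => a) (fun _ => E) (fun s => s) τC 0 0 1 tC)
    (hTA : τA a = T) (hTE : τE E = T) (hTC : τC c = T) (hT : 0 < T)
    (hmA : mA = tA * u₀ 0 + ∫ x in (0:ℝ)..T, Slice.jet gA a x 0)
    (hmE : mE = tE * u₀ 0 + ∫ x in (0:ℝ)..T, Slice.jet gE E x 0)
    (hmC : mC = tC * u₀ 0 + ∫ x in (0:ℝ)..T, Slice.jet gC c x 0)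
    (hpA : pA = 1 / 2 * tA * u₀ 0 ^ 2
      + ∫ x in (0:ℝ)..T, Slice.jet gA a x 0 * (u₀ x - deriv (deriv u₀) x))
    (hpE : pE = 1 / 2 * tE * u₀ 0 ^ 2
      + ∫ x in (0:ℝ)..T, Slice.jet gE E x 0 * (u₀ x - deriv (deriv u₀) x))
    (hpC : pC = 1 / 2 * tC * u₀ 0 ^ 2
      + ∫ x in (0:ℝ)..T, Slice.jet gC c x 0 * (u₀ x - deriv (deriv u₀) x))
    (hne : f (u₀ 0) - (c - 1) * u₀ 0 - a ≠ 0)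
    (hJ3 : 0 < Matrix.det !![tA, tE, tC; mA, mE, mC; pA, pE, pC])
    (hJ2 : 0 < tA * mE - tE * mA) :
    ∃ (A B V : ℝ → Fin 3 → ℝ) (S : ℝ),
      WaveData c T (fun x => c - 1 - deriv f (u₀ x)) (fun x => deriv (deriv f) (u₀ x) * deriv u₀ x)
        u₀ (deriv u₀) (deriv (deriv u₀)) (deriv (deriv (deriv u₀))) A B V tA tE mA mE S := by
  have hf1 : Differentiable ℝ f := hf.differentiable (by norm_num)
  have hf2 : Differentiable ℝ (deriv f) :=
    (hf.of_le (by norm_num : (2 : WithTop ℕ∞) ≤ 3)).differentiable_deriv_two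
  have cf2 : Continuous (deriv (deriv f)) := by
    have h1 : ContDiff ℝ (1 + 1 + 1) f := hf.of_le (by norm_num)
    have h2 : ContDiff ℝ (1 + 1) (deriv f) := (contDiff_succ_iff_deriv.1 h1).2.2
    exact (contDiff_succ_iff_deriv.1 h2).2.2.continuous
  have hu (x : ℝ) : HasDerivAt u₀ (deriv u₀ x) x := by
    have := SA.has0 x; rwa [SA.eq1] at this
  have hu1 (x : ℝ) : HasDerivAt (deriv u₀) (deriv (deriv u₀) x) x := by
    have := SA.has1 x; rwa [SA.eq2] at this
  have c0 : Continuous u₀ := continuous_iff_continuousAt.2 fun x => (hu x).continuousAt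
  have c1 : Continuous (deriv u₀) := continuous_iff_continuousAt.2 fun x => (hu1 x).continuousAt
  have c2 : Continuous (deriv (deriv u₀)) :=
    continuous_iff_continuousAt.2 fun x => (SA.has2 x).continuousAt
  have hprof (x : ℝ) : c * deriv (deriv u₀) x = (c - 1) * u₀ x - f (u₀ x) + a := by
    have := SA.profile a SA.mem x
    simpa only [SA.base, SA.eq2] using this
  have hc : 0 < c := SA.γ_pos
  set K := tA * mE - tE * mA with hK
  -- `αA + βE` has the same period and mass variation as the variation in `c`
  set α := (tC * mE - tE * mC) / K with hα
  set β := (tA * mC - tC * mA) / K with hβ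
  have eT : α * tA + β * tE = tC := by
    rw [hα, hβ]; field_simp; rw [hK]; ring
  have eM : α * mA + β * mE = mC := by
    rw [hα, hβ]; field_simp; rw [hK]; ring
  have solA := SA.jet_sol hf
  have solE := SE.jet_sol hf
  have solC := SC.jet_sol hf
  have jA := SA.jump1
  have jE := SE.jump1
  have jC := SC.jump1
  have zA := SA.jump0
  have zE := SE.jump0
  have zC := SC.jump0
  rw [hTA] at jA zA
  rw [hTE] at jE zE
  rw [hTC] at jC zC
  have iA := ((solA.cont 0).intervalIntegrable (μ := volume) 0 T)
  have iE := ((solE.cont 0).intervalIntegrable (μ := volume) 0 T)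
  have iC := ((solC.cont 0).intervalIntegrable (μ := volume) 0 T)
  have kA : IntervalIntegrable (fun x => Slice.jet gA a x 0 * (u₀ x - deriv (deriv u₀) x))
      volume 0 T := ((solA.cont 0).mul (c0.sub c2)).intervalIntegrable _ _
  have kE : IntervalIntegrable (fun x => Slice.jet gE E x 0 * (u₀ x - deriv (deriv u₀) x))
      volume 0 T := ((solE.cont 0).mul (c0.sub c2)).intervalIntegrable _ _
  have kC : IntervalIntegrable (fun x => Slice.jet gC c x 0 * (u₀ x - deriv (deriv u₀) x))
      volume 0 T := ((solC.cont 0).mul (c0.sub c2)).intervalIntegrable _ _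
  have p0 := SA.period 0
  rw [zero_add, hTA] at p0
  have p1 := SA.deriv_T
  have p2 := SA.deriv2_T
  rw [hTA] at p1 p2
  have enE := SE.energy_var hF
  refine ⟨Slice.jet gA a, Slice.jet gE E,
    fun x => (α • Slice.jet gA a x + β • Slice.jet gE E x) - Slice.jet gC c x,
    pC - α * pA - β * pE,
    { c_pos := hc, T_pos := hT, hp := ?_, hq := ?_, h0 := hu, h1 := hu1, h2 := SA.has2, h3 := ?_,
      per0 := p0, u1_zero := SA.deriv_zero, u1_T := p1, per2 := p2, perp := ?_, u2_ne := ?_,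
      solA := solA.congr_force fun x => by simp, solE := solE.congr_force fun x => by simp,
      solV := ?_, ellA := ?_, ellE := ?_, energyE := ?_, jumpA := jA, jumpE := jE,
      massA := by rw [hmA]; ring, massE := by rw [hmE]; ring,
      perV0 := ?_, perV1 := ?_, massV := ?_, momV := ?_, S_pos := ?_, K_pos := hJ2 }⟩
  · intro x
    exact (((hf2 (u₀ x)).hasDerivAt.comp x (hu x)).const_sub (c - 1)).congr_deriv rfl
  · exact (cf2.comp c0).mul c1
  · intro x
    have L := (SA.has2 x).const_mul c
    have R := (((hu x).const_mul (c - 1)).sub ((hf1 (u₀ x)).hasDerivAt.comp x (hu x))).add_const a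
    refine (L.unique (R.congr_of_eventuallyEq (Eventually.of_forall hprof))).trans ?_
    ring
  · simp only [p0]
  · intro h
    have := hprof 0
    rw [h] at this
    exact hne (by linarith)
  · exact (((solA.smul α).add (solE.smul β)).sub solC).congr_force fun x => by ring
  · simpa using SA.ell hf1 0
  · simpa using SE.ell hf1 0
  · simpa using enE
  · simp only [Pi.sub_apply, Pi.add_apply, Pi.smul_apply, smul_eq_mul, zA, zE, zC]
  · simp only [Pi.sub_apply, Pi.add_apply, Pi.smul_apply, smul_eq_mul, jA, jE, jC]
    linear_combination (-deriv (deriv u₀) 0) * eT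
  · simp only [Pi.sub_apply, Pi.add_apply, Pi.smul_apply, smul_eq_mul]
    rw [intervalIntegral.integral_sub ((iA.const_mul α).add (iE.const_mul β)) iC,
      intervalIntegral.integral_add (iA.const_mul α) (iE.const_mul β),
      intervalIntegral.integral_const_mul, intervalIntegral.integral_const_mul]
    linear_combination eM - α * hmA - β * hmE + hmC - u₀ 0 * eT
  · simp only [Pi.sub_apply, Pi.add_apply, Pi.smul_apply, smul_eq_mul]
    have : ∫ x in (0:ℝ)..T, (α * Slice.jet gA a x 0 + β * Slice.jet gE E x 0 - Slice.jet gC c x 0)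
          * (u₀ x - deriv (deriv u₀) x)
        = ∫ x in (0:ℝ)..T, (α * (Slice.jet gA a x 0 * (u₀ x - deriv (deriv u₀) x))
          + β * (Slice.jet gE E x 0 * (u₀ x - deriv (deriv u₀) x))
          - Slice.jet gC c x 0 * (u₀ x - deriv (deriv u₀) x)) :=
      intervalIntegral.integral_congr fun x _ => by ring
    rw [this, intervalIntegral.integral_sub ((kA.const_mul α).add (kE.const_mul β)) kC,
      intervalIntegral.integral_add (kA.const_mul α) (kE.const_mul β),
      intervalIntegral.integral_const_mul, intervalIntegral.integral_const_mul]
    linear_combination hpC - α * hpA - β * hpE - 1 / 2 * u₀ 0 ^ 2 * eT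
  · have : pC - α * pA - β * pE = Matrix.det !![tA, tE, tC; mA, mE, mC; pA, pE, pC] / K := by
      rw [eq_div_iff hJ2.ne', Matrix.det_fin_three, hα, hβ]
      simp
      field_simp
      rw [hK]; ring
    rw [this]
    exact div_pos hJ3 hJ2

/-- For a smooth curve of parameters in `Ω` through `(a, E, c)` the wave family restricts to a
`Slice`, and the derivatives of mass and momentum along the curve are the expected integrals. -/
lemma slice_of_family {f F : ℝ → ℝ} (hf : ContDiff ℝ 3 f) {G : ℝ → ℝ → ℝ → ℝ}
    (hG : ∀ s a c, G s a c = F s - (c - 1)/2 * s^2 - a * s)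
    {Ω : Set (ℝ × ℝ × ℝ)} (hΩ : IsOpen Ω) (hc : ∀ p ∈ Ω, 1 < p.2.2)
    {um : ℝ × ℝ × ℝ → ℝ}
    (hGm : ∀ a E c : ℝ, (a, E, c) ∈ Ω → G (um (a, E, c)) a c = E)
    {T : ℝ × ℝ × ℝ → ℝ} (hT : ContDiffOn ℝ 1 T Ω) {u : ℝ → ℝ → ℝ → ℝ → ℝ}
    (hu : ContDiffOn ℝ 3 (fun q : ℝ × ℝ × ℝ × ℝ => u q.1 q.2.1 q.2.2.1 q.2.2.2)
      ((Set.univ : Set ℝ) ×ˢ Ω))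
    (hprofile : ∀ a E c : ℝ, (a, E, c) ∈ Ω → ∀ x : ℝ,
      c * deriv (deriv (fun y => u y a E c)) x
        = (c - 1) * u x a E c - f (u x a E c) + a)
    (hperiodic : ∀ a E c : ℝ, (a, E, c) ∈ Ω → ∀ x : ℝ,
      u (x + T (a, E, c)) a E c = u x a E c)
    (hinit : ∀ a E c : ℝ, (a, E, c) ∈ Ω → u 0 a E c = um (a, E, c))
    (hinit' : ∀ a E c : ℝ, (a, E, c) ∈ Ω → deriv (fun y => u y a E c) 0 = 0)
    {M P : ℝ × ℝ × ℝ → ℝ}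
    (hM : ∀ q : ℝ × ℝ × ℝ, M q = ∫ x in (0:ℝ)..(T q), u x q.1 q.2.1 q.2.2)
    (hP : ∀ q : ℝ × ℝ × ℝ, P q = (1/2) * ∫ x in (0:ℝ)..(T q),
      ((u x q.1 q.2.1 q.2.2)^2 + (deriv (fun y => u y q.1 q.2.1 q.2.2) x)^2))
    {α η γ : ℝ → ℝ} (cα : ContDiff ℝ 3 α) (cη : ContDiff ℝ 3 η) (cγ : ContDiff ℝ 3 γ)
    {s₀ d1 d2 d3 : ℝ} (hα : HasDerivAt α d1 s₀) (hη : HasDerivAt η d2 s₀)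
    (hγ : HasDerivAt γ d3 s₀) (hmem : (α s₀, η s₀, γ s₀) ∈ Ω) :
    ∃ (g : ℝ × ℝ → ℝ) (J : Set ℝ),
      Slice f F g J s₀ (fun x => u x (α s₀) (η s₀) (γ s₀)) α η γ (fun s => T (α s, η s, γ s))
        d1 d2 d3 (deriv (fun s => T (α s, η s, γ s)) s₀) ∧
      deriv (fun s => M (α s, η s, γ s)) s₀
        = deriv (fun s => T (α s, η s, γ s)) s₀ * u 0 (α s₀) (η s₀) (γ s₀)
          + ∫ x in (0:ℝ)..T (α s₀, η s₀, γ s₀), Slice.jet g s₀ x 0 ∧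
      deriv (fun s => P (α s, η s, γ s)) s₀
        = 1 / 2 * deriv (fun s => T (α s, η s, γ s)) s₀ * u 0 (α s₀) (η s₀) (γ s₀) ^ 2
          + ∫ x in (0:ℝ)..T (α s₀, η s₀, γ s₀), Slice.jet g s₀ x 0 *
            (u x (α s₀) (η s₀) (γ s₀)
              - deriv (deriv fun x => u x (α s₀) (η s₀) (γ s₀)) x) := by
  set ρ : ℝ → ℝ × ℝ × ℝ := fun s => (α s, η s, γ s) with hρ
  have cρ : ContDiff ℝ 3 ρ := cα.prodMk (cη.prodMk cγ)
  set g : ℝ × ℝ → ℝ := fun z => u z.1 (α z.2) (η z.2) (γ z.2) with hg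
  set J : Set ℝ := ρ ⁻¹' Ω with hJd
  have hJ : J ∈ 𝓝 s₀ := (hΩ.preimage cρ.continuous).mem_nhds hmem
  have smooth : ∀ x, ∀ s ∈ J, ContDiffAt ℝ 3 g (x, s) := by
    intro x s hs
    have h1 := hu.contDiffAt (x := (x, ρ s)) ((isOpen_univ.prod hΩ).mem_nhds ⟨trivial, hs⟩)
    have h2 : ContDiffAt ℝ 3 (fun z : ℝ × ℝ => (z.1, ρ z.2)) (x, s) :=
      (contDiff_fst.prodMk (cρ.comp contDiff_snd)).contDiffAt
    exact h1.comp (x, s) h2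
  have e1 : ∀ s ∈ J, ∀ x, dX g (x, s) = deriv (fun y => u y (α s) (η s) (γ s)) x :=
    fun s hs x => (hasDerivAt_dX ((smooth x s hs).differentiableAt (by norm_num))).deriv.symm
  have e2 : ∀ s ∈ J, ∀ x, dX (dX g) (x, s) = deriv (deriv fun y => u y (α s) (η s) (γ s)) x := by
    intro s hs x
    have := (hasDerivAt_dX ((contDiffAt_dX (m := 2) (smooth x s hs)
      (by norm_num)).differentiableAt (by norm_num))).deriv
    simp only [e1 s hs] at this
    exact this.symm
  have hτ : DifferentiableAt ℝ (fun s => T (ρ s)) s₀ :=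
    ((hT.contDiffAt (hΩ.mem_nhds hmem)).differentiableAt one_ne_zero).comp s₀
      (cρ.differentiable (by norm_num) s₀)
  have S : Slice f F g J s₀ (fun x => u x (α s₀) (η s₀) (γ s₀)) α η γ (fun s => T (ρ s))
      d1 d2 d3 (deriv (fun s => T (ρ s)) s₀) :=
    { hJ := hJ, smooth := smooth, base := fun x => rfl
      profile := fun s hs x => by rw [e2 s hs]; exact hprofile _ _ _ hs x
      energy := fun s hs => by
        have := hGm _ _ _ hs
        rw [← hinit _ _ _ hs, hG] at this
        exact this
      periodic := fun s hs x => hperiodic _ _ _ hs x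
      at_zero := fun s hs => by rw [e1 s hs]; exact hinit' _ _ _ hs
      hα := hα, hη := hη, hγ := hγ, hτ := hτ.hasDerivAt
      γ_pos := zero_lt_one.trans (hc _ hmem) }
  refine ⟨g, J, S, ?_, ?_⟩
  · refine (S.mass.congr_of_eventuallyEq (Eventually.of_forall fun s => ?_)).deriv
    exact hM (ρ s)
  · refine ((S.momentum hf).congr_of_eventuallyEq ?_).deriv
    filter_upwards [hJ] with s hs
    simp only [e1 s hs]
    exact hP (ρ s)

/-! ### Real spectral parameters -/

section RealFamily
variable {c : ℝ} {p q : ℝ → ℝ} {Hm : ℂ → ℝ → ℝ → Matrix (Fin 3) (Fin 3) ℂ}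
  {Y : ℂ → ℝ → ℝ → Matrix (Fin 3) (Fin 3) ℂ}

/-- For real `μ` the coefficients are real, so any real-linear functional that commutes with real
scalars, such as `re` and `im`, maps columns of the complex fundamental matrix to real
solutions. -/
lemma forcedSol_of_complex
    (hHm : ∀ (μ : ℂ) (k x : ℝ), Hm μ k x =
      !![0, 1, 0; 0, 0, 1;
         -(μ + (q x : ℂ)) / (c : ℂ), ((p x + k ^ 2 : ℝ) : ℂ) / (c : ℂ), μ / (c : ℂ)])
    (hYode : ∀ (μ : ℂ) (k x : ℝ) (i j : Fin 3),
      HasDerivAt (fun y => Y μ k y i j) ((Hm μ k x * Y μ k x) i j) x)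
    (L : ℂ →L[ℝ] ℝ) (m k : ℝ) (j : Fin 3) :
    ForcedSol c p q m k (fun _ => 0) (fun x i => L (Y m k x i j)) := by
  have key (x : ℝ) (i : Fin 3) : HasDerivAt (fun y => L (Y m k y i j))
      (L ((Hm m k x * Y m k x) i j)) x :=
    L.hasFDerivAt.comp_hasDerivAt x (hYode m k x i j)
  have e0 (x : ℝ) : (Hm m k x * Y m k x) 0 j = Y m k x 1 j := by
    simp [hHm, Matrix.mul_apply, Fin.sum_univ_three]
  have e1 (x : ℝ) : (Hm m k x * Y m k x) 1 j = Y m k x 2 j := by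
    simp [hHm, Matrix.mul_apply, Fin.sum_univ_three]
  have e2 (x : ℝ) : (Hm m k x * Y m k x) 2 j = (-(m + q x) / c : ℝ) • Y m k x 0 j
      + ((p x + k ^ 2) / c : ℝ) • Y m k x 1 j + (m / c : ℝ) • Y m k x 2 j := by
    simp [hHm, Matrix.mul_apply, Fin.sum_univ_three]
  refine ⟨fun x => ?_, fun x => ?_, fun x => ?_⟩
  · have := key x 0; rwa [e0] at this
  · have := key x 1; rwa [e1] at this
  · have := key x 2
    rw [e2, map_add, map_add, map_smul, map_smul, map_smul] at this
    refine this.congr_deriv ?_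
    simp only [smul_eq_mul]; ring

/-- On the real axis the complex Evans function is real and agrees with the one of the real
fundamental matrix. -/
lemma det_complex (hc : 0 < c) (hp : Continuous p) (hq : Continuous q) {T : ℝ} (hT : 0 < T)
    (hHm : ∀ (μ : ℂ) (k x : ℝ), Hm μ k x =
      !![0, 1, 0; 0, 0, 1;
         -(μ + (q x : ℂ)) / (c : ℂ), ((p x + k ^ 2 : ℝ) : ℂ) / (c : ℂ), μ / (c : ℂ)])
    (hY0 : ∀ (μ : ℂ) (k : ℝ), Y μ k 0 = 1)
    (hYode : ∀ (μ : ℂ) (k x : ℝ) (i j : Fin 3),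
      HasDerivAt (fun y => Y μ k y i j) ((Hm μ k x * Y μ k x) i j) x)
    (m k : ℝ) :
    (Y m k T - 1).det = (((Y m k T).map Complex.re - 1).det : ℝ) := by
  obtain ⟨C, -, hC⟩ := ForcedSol.gronwall (T := T) hc p q hp hq (max |m| |k|)
  have him (i j : Fin 3) : (Y m k T i j).im = 0 := by
    have := hC m k 0 (fun _ => 0) _ (le_max_left _ _) (le_max_right _ _) le_rfl
      (fun x _ => by simp) (forcedSol_of_complex hHm hYode Complex.imCLM m k j)
      (fun i => by
        rw [hY0, Matrix.one_apply]; split_ifs <;> simp) T ⟨hT.le, le_rfl⟩ i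
    simpa using this
  have e : Y m k T - 1 = (((Y m k T).map Complex.re - 1).map Complex.ofRealHom) := by
    ext i j
    apply Complex.ext
    · by_cases h : i = j <;> simp [Matrix.sub_apply, h]
    · by_cases h : i = j <;> simp [Matrix.sub_apply, h, him]
  rw [e]
  exact (RingHom.map_det Complex.ofRealHom _).symm

/-- Only `k²` enters the equation, so rescaling `k` by a sign gives another real fundamental
family. -/
lemma isFund_re
    (hHm : ∀ (μ : ℂ) (k x : ℝ), Hm μ k x =
      !![0, 1, 0; 0, 0, 1;
         -(μ + (q x : ℂ)) / (c : ℂ), ((p x + k ^ 2 : ℝ) : ℂ) / (c : ℂ), μ / (c : ℂ)])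
    (hY0 : ∀ (μ : ℂ) (k : ℝ), Y μ k 0 = 1)
    (hYode : ∀ (μ : ℂ) (k x : ℝ) (i j : Fin 3),
      HasDerivAt (fun y => Y μ k y i j) ((Hm μ k x * Y μ k x) i j) x)
    {σ : ℝ} (hσ : σ ^ 2 = 1) :
    IsFund c p q (fun m k x => (Y m (σ * k) x).map Complex.re) where
  at_zero m k := by
    ext i j
    by_cases h : i = j <;> simp [hY0, Matrix.one_apply, h]
  sol m k j := by
    have S := forcedSol_of_complex hHm hYode Complex.reCLM m (σ * k) j
    refine ⟨S.d0, S.d1, fun x => ?_⟩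
    have := S.d2 x
    rw [mul_pow, hσ, one_mul] at this
    exact this

end RealFamily

end TransverseInstability

open TransverseInstability

/-- Transverse instability criterion for periodic gBBM waves in the
gBBM–Zakharov–Kuznetsov equation: if `{T,M,P}_{a,E,c} > 0` and `{T,M}_{a,E} > 0`,
then for every small nonzero transverse wavenumber `k` the periodic Evans function
`D(·,k)` has a root with positive real part. -/
theorem gBBMZK_transverse_instability
    (f F : ℝ → ℝ) (hf : ContDiff ℝ 3 f)
    (hF : ∀ s, HasDerivAt F (f s) s) (hF0 : F 0 = 0)
    (G : ℝ → ℝ → ℝ → ℝ) (hG : ∀ s a c, G s a c = F s - (c - 1)/2 * s^2 - a * s)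
    (Ω : Set (ℝ × ℝ × ℝ)) (hΩ : IsOpen Ω)
    (hc : ∀ p ∈ Ω, 1 < p.2.2)
    (um up : ℝ × ℝ × ℝ → ℝ)
    (hum : ContDiffOn ℝ 1 um Ω) (hup : ContDiffOn ℝ 1 up Ω)
    (horder : ∀ p ∈ Ω, um p < up p)
    (hGm : ∀ a E c : ℝ, (a, E, c) ∈ Ω → G (um (a, E, c)) a c = E)
    (hGp : ∀ a E c : ℝ, (a, E, c) ∈ Ω → G (up (a, E, c)) a c = E)
    (hGm' : ∀ a E c : ℝ, (a, E, c) ∈ Ω → deriv (fun s => G s a c) (um (a, E, c)) ≠ 0)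
    (hGp' : ∀ a E c : ℝ, (a, E, c) ∈ Ω → deriv (fun s => G s a c) (up (a, E, c)) ≠ 0)
    (hbelow : ∀ a E c : ℝ, (a, E, c) ∈ Ω →
      ∀ s ∈ Set.Ioo (um (a, E, c)) (up (a, E, c)), G s a c < E)
    (T : ℝ × ℝ × ℝ → ℝ) (hT : ContDiffOn ℝ 1 T Ω) (hTpos : ∀ p ∈ Ω, 0 < T p)
    (u : ℝ → ℝ → ℝ → ℝ → ℝ)
    (hu : ContDiffOn ℝ 3 (fun q : ℝ × ℝ × ℝ × ℝ => u q.1 q.2.1 q.2.2.1 q.2.2.2)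
      ((Set.univ : Set ℝ) ×ˢ Ω))
    (hprofile : ∀ a E c : ℝ, (a, E, c) ∈ Ω → ∀ x : ℝ,
      c * deriv (deriv (fun y => u y a E c)) x
        = (c - 1) * u x a E c - f (u x a E c) + a)
    (henergy : ∀ a E c : ℝ, (a, E, c) ∈ Ω → ∀ x : ℝ,
      c/2 * (deriv (fun y => u y a E c) x)^2 + G (u x a E c) a c = E)
    (hperiodic : ∀ a E c : ℝ, (a, E, c) ∈ Ω → ∀ x : ℝ,
      u (x + T (a, E, c)) a E c = u x a E c)
    (hinit : ∀ a E c : ℝ, (a, E, c) ∈ Ω → u 0 a E c = um (a, E, c))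
    (hinit' : ∀ a E c : ℝ, (a, E, c) ∈ Ω → deriv (fun y => u y a E c) 0 = 0)
    (M P : ℝ × ℝ × ℝ → ℝ)
    (hM : ∀ q : ℝ × ℝ × ℝ, M q = ∫ x in (0:ℝ)..(T q), u x q.1 q.2.1 q.2.2)
    (hP : ∀ q : ℝ × ℝ × ℝ, P q = (1/2) * ∫ x in (0:ℝ)..(T q),
      ((u x q.1 q.2.1 q.2.2)^2 + (deriv (fun y => u y q.1 q.2.1 q.2.2) x)^2))
    (a E c : ℝ) (hmem : (a, E, c) ∈ Ω)
    (Hm : ℂ → ℝ → ℝ → Matrix (Fin 3) (Fin 3) ℂ)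
    (hHm : ∀ (μ : ℂ) (k x : ℝ), Hm μ k x =
      !![0, 1, 0;
         0, 0, 1;
         -(μ + ((deriv (deriv f) (u x a E c) * deriv (fun y => u y a E c) x : ℝ) : ℂ)) / (c : ℂ),
           ((c - 1 + k^2 - deriv f (u x a E c) : ℝ) : ℂ) / (c : ℂ), μ / (c : ℂ)])
    (Y : ℂ → ℝ → ℝ → Matrix (Fin 3) (Fin 3) ℂ)
    (hY0 : ∀ (μ : ℂ) (k : ℝ), Y μ k 0 = 1)
    (hYode : ∀ (μ : ℂ) (k x : ℝ) (i j : Fin 3),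
      HasDerivAt (fun y => Y μ k y i j) ((Hm μ k x * Y μ k x) i j) x)
    (D : ℂ → ℝ → ℂ)
    (hD : ∀ (μ : ℂ) (k : ℝ), D μ k = Matrix.det (Y μ k (T (a, E, c)) - 1))
    (hJ3 : 0 < Matrix.det
      !![deriv (fun a' => T (a', E, c)) a, deriv (fun E' => T (a, E', c)) E,
           deriv (fun c' => T (a, E, c')) c;
         deriv (fun a' => M (a', E, c)) a, deriv (fun E' => M (a, E', c)) E,
           deriv (fun c' => M (a, E, c')) c;
         deriv (fun a' => P (a', E, c)) a, deriv (fun E' => P (a, E', c)) E,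
           deriv (fun c' => P (a, E, c')) c])
    (hJ2 : 0 < deriv (fun a' => T (a', E, c)) a * deriv (fun E' => M (a, E', c)) E
      - deriv (fun E' => T (a, E', c)) E * deriv (fun a' => M (a', E, c)) a) :
    ∃ k₀ > 0, ∀ k : ℝ, 0 < |k| → |k| < k₀ →
      ∃ μ : ℂ, 0 < μ.re ∧ D μ k = 0 := by
  have hpos : 0 < c := zero_lt_one.trans (hc _ hmem)
  obtain ⟨gA, JA, SA, hMA, hPA⟩ := slice_of_family hf hG hΩ hc hGm hT hu hprofile hperiodic
    hinit hinit' hM hP (α := fun s => s) (η := fun _ => E) (γ := fun _ => c)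
    contDiff_id contDiff_const contDiff_const (hasDerivAt_id a) (hasDerivAt_const a E)
    (hasDerivAt_const a c) hmem
  obtain ⟨gE, JE, SE, hME, hPE⟩ := slice_of_family hf hG hΩ hc hGm hT hu hprofile hperiodic
    hinit hinit' hM hP (α := fun _ => a) (η := fun s => s) (γ := fun _ => c)
    contDiff_const contDiff_id contDiff_const (hasDerivAt_const E a) (hasDerivAt_id E)
    (hasDerivAt_const E c) hmem
  obtain ⟨gC, JC, SC, hMC, hPC⟩ := slice_of_family hf hG hΩ hc hGm hT hu hprofile hperiodic
    hinit hinit' hM hP (α := fun _ => a) (η := fun _ => E) (γ := fun s => s)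
    contDiff_const contDiff_const contDiff_id (hasDerivAt_const c a) (hasDerivAt_const c E)
    (hasDerivAt_id c) hmem
  have hne : f (u 0 a E c) - (c - 1) * u 0 a E c - a ≠ 0 := by
    have h := hGm' a E c hmem
    rw [← hinit a E c hmem] at h
    have hd : HasDerivAt (fun s => G s a c) (f (u 0 a E c) - (c - 1) * u 0 a E c - a)
        (u 0 a E c) := by
      simp only [hG]
      refine (((hF _).sub ((hasDerivAt_pow 2 (u 0 a E c)).const_mul ((c - 1) / 2))).sub
        ((hasDerivAt_id (u 0 a E c)).const_mul a)).congr_deriv ?_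
      simp; ring
    rwa [hd.deriv] at h
  obtain ⟨A, B, V, S, W⟩ := waveData_of_slices hf hF SA SE SC rfl rfl rfl (hTpos _ hmem)
    hMA hME hMC hPA hPE hPC hne hJ3 hJ2
  have hHm' : ∀ (μ : ℂ) (k x : ℝ), Hm μ k x =
      !![0, 1, 0; 0, 0, 1;
         -(μ + ((deriv (deriv f) (u x a E c) * deriv (fun y => u y a E c) x : ℝ) : ℂ)) / (c : ℂ),
         ((c - 1 - deriv f (u x a E c) + k ^ 2 : ℝ) : ℂ) / (c : ℂ), μ / (c : ℂ)] := by
    intro μ k x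
    rw [hHm, show c - 1 + k ^ 2 - deriv f (u x a E c) = c - 1 - deriv f (u x a E c) + k ^ 2 by ring]
  have root (σ : ℝ) (hσ : σ ^ 2 = 1) :
      ∃ k₀ > 0, ∀ κ, 0 < κ → κ < k₀ → ∃ μ : ℂ, 0 < μ.re ∧ D μ (σ * κ) = 0 := by
    obtain ⟨k₀, hk₀, h⟩ := W.exists_root (isFund_re hHm' hY0 hYode hσ)
    refine ⟨k₀, hk₀, fun κ h0 h1 => ?_⟩
    obtain ⟨m, hm, hdet⟩ := h κ h0 h1
    refine ⟨m, by simpa using hm, ?_⟩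
    rw [hD, det_complex hpos W.cont_p W.hq W.T_pos hHm' hY0 hYode, hdet, Complex.ofReal_zero]
  obtain ⟨k₁, hk₁, h₁⟩ := root 1 (by norm_num)
  obtain ⟨k₂, hk₂, h₂⟩ := root (-1) (by norm_num)
  refine ⟨min k₁ k₂, lt_min hk₁ hk₂, fun k h0 hk => ?_⟩
  rcases abs_cases k with ⟨e, -⟩ | ⟨e, -⟩
  · simpa [e] using h₁ |k| h0 (hk.trans_le (min_le_left _ _))
  · simpa [e] using h₂ |k| h0 (hk.trans_le (min_le_right _ _))
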